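/- arXiv:1806.09162 — 4 statements merged into one kernel-verified Lean document; each statement's English description precedes it below -/
import Mathlib

section
/- At every point of the Boyer–Lindquist chart U, the inverse Kerr metric matrix satisfies the completeness relation ḡ^{μν} = −ℓ^μ n^ν − n^μ ℓ^ν + m^μ m*^ν + m*^μ m^ν for all μ, ν ∈ {t,r,θ,φ}, where (ḡ^{μν}) is the pointwise inverse matrix of (ḡ_{μν}). -/
/-!
The relation is checked against an explicit inverse. With `Δ`, `Σ`, `sin θ` nonzero on the chart, the
matrix `gInv` is a right inverse of the Kerr matrix (`gK_mul_gInv`), hence it is the inverse; the only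
identities involved are `Σ = r² + a² - a² sin² θ` and polynomial algebra. On the tetrad side, the
denominators in `m^μ m*^ν` multiply to `2 (r + i a cos θ)(r - i a cos θ) = 2Σ` (`mup_mul_mst`), so both
sides are rational in `r, a, Δ, Σ, sin θ` and agree entry by entry.
-/

/-!
Statement 0: Normalization relations of the Kinnersley tetrad on the
Boyer–Lindquist chart of the Kerr metric.
-/

noncomputable section

open Real

namespace KerrStmt1

/-- `Δ(r) = r² − 2mr + a²`. -/
def Δk (a m r : ℝ) : ℝ := r ^ 2 - 2 * m * r + a ^ 2

/-- `r₊ = m + √(m² − a²)`. -/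
def rplus (a m : ℝ) : ℝ := m + Real.sqrt (m ^ 2 - a ^ 2)

/-- `Σ(r,θ) = r² + a² cos² θ`. -/
def Sigk (a r θ : ℝ) : ℝ := r ^ 2 + a ^ 2 * Real.cos θ ^ 2

/-- Kerr metric components in Boyer–Lindquist coordinates, at the point
`p = (t, r, θ, φ)` (coordinate order `t,r,θ,φ`). -/
def gK (a m : ℝ) (p : Fin 4 → ℝ) : Matrix (Fin 4) (Fin 4) ℝ :=
  let r := p 1
  let θ := p 2
  !![ -((Δk a m r - a ^ 2 * Real.sin θ ^ 2) / Sigk a r θ), 0, 0,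
        -(a * Real.sin θ ^ 2 * (r ^ 2 + a ^ 2 - Δk a m r) / Sigk a r θ);
      0, Sigk a r θ / Δk a m r, 0, 0;
      0, 0, Sigk a r θ, 0;
      -(a * Real.sin θ ^ 2 * (r ^ 2 + a ^ 2 - Δk a m r) / Sigk a r θ), 0, 0,
        ((r ^ 2 + a ^ 2) ^ 2 - Δk a m r * a ^ 2 * Real.sin θ ^ 2) * Real.sin θ ^ 2 / Sigk a r θ ]

/-- The Kinnersley tetrad vector `ℓ`. -/
def ℓup (a m : ℝ) (p : Fin 4 → ℝ) : Fin 4 → ℂ :=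
  let r := p 1
  ![(((r ^ 2 + a ^ 2) / Δk a m r : ℝ) : ℂ), 1, 0, ((a / Δk a m r : ℝ) : ℂ)]

/-- The Kinnersley tetrad vector `n`. -/
def nup (a m : ℝ) (p : Fin 4 → ℝ) : Fin 4 → ℂ :=
  let r := p 1
  let θ := p 2
  fun μ => ((1 / (2 * Sigk a r θ) : ℝ) : ℂ) *
    ![((r ^ 2 + a ^ 2 : ℝ) : ℂ), ((-(Δk a m r) : ℝ) : ℂ), 0, ((a : ℝ) : ℂ)] μ

/-- The Kinnersley tetrad vector `m`. -/
def mup (a m : ℝ) (p : Fin 4 → ℝ) : Fin 4 → ℂ :=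
  let r := p 1
  let θ := p 2
  fun μ => (1 / (Real.sqrt 2 * ((r : ℂ) + Complex.I * (a : ℂ) * (Real.cos θ : ℂ)))) *
    ![Complex.I * (a : ℂ) * (Real.sin θ : ℂ), 0, 1, Complex.I / (Real.sin θ : ℂ)] μ

/-- The componentwise complex conjugate `m*` of `m`. -/
def mst (a m : ℝ) (p : Fin 4 → ℝ) : Fin 4 → ℂ :=
  fun μ => starRingEnd ℂ (mup a m p μ)

/-- Complex-bilinear contraction with the Kerr metric:
`ḡ(X,Y) = Σ_{μ,ν} ḡ_{μν} X^μ Y^ν`. -/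
def gdot (a m : ℝ) (p : Fin 4 → ℝ) (X Y : Fin 4 → ℂ) : ℂ :=
  ∑ μ : Fin 4, ∑ ν : Fin 4, ((gK a m p μ ν : ℝ) : ℂ) * X μ * Y ν

/-- The classical closed form of the inverse Kerr metric in Boyer–Lindquist coordinates. -/
def gInv (a m : ℝ) (p : Fin 4 → ℝ) : Matrix (Fin 4) (Fin 4) ℝ :=
  let r := p 1
  let θ := p 2
  !![ -(((r ^ 2 + a ^ 2) ^ 2 - Δk a m r * a ^ 2 * Real.sin θ ^ 2) / (Sigk a r θ * Δk a m r)), 0, 0,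
        -(a * (r ^ 2 + a ^ 2 - Δk a m r) / (Sigk a r θ * Δk a m r));
      0, Δk a m r / Sigk a r θ, 0, 0;
      0, 0, 1 / Sigk a r θ, 0;
      -(a * (r ^ 2 + a ^ 2 - Δk a m r) / (Sigk a r θ * Δk a m r)), 0, 0,
        (Δk a m r - a ^ 2 * Real.sin θ ^ 2) / (Sigk a r θ * Δk a m r * Real.sin θ ^ 2) ]

lemma Sigk_eq (a r θ : ℝ) : Sigk a r θ = r ^ 2 + a ^ 2 - a ^ 2 * Real.sin θ ^ 2 := by
  rw [Sigk, Real.cos_sq']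
  ring

lemma Δk_pos {a m r : ℝ} (ham : |a| < m) (hr : rplus a m < r) : 0 < Δk a m r := by
  have h0 : 0 ≤ m ^ 2 - a ^ 2 := by
    have := sq_lt_sq' (by linarith [abs_nonneg a]) ham
    rw [sq_abs] at this
    linarith
  have h1 := Real.sq_sqrt h0
  have h2 := Real.sqrt_nonneg (m ^ 2 - a ^ 2)
  unfold rplus at hr
  unfold Δk
  nlinarith

lemma Sigk_pos {a m r : ℝ} (θ : ℝ) (ham : |a| < m) (hr : rplus a m < r) : 0 < Sigk a r θ := by
  have h2 := Real.sqrt_nonneg (m ^ 2 - a ^ 2)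
  have h3 := abs_nonneg a
  have hr0 : 0 < r := by
    unfold rplus at hr
    linarith
  unfold Sigk
  positivity

lemma gK_mul_gInv {a m : ℝ} {p : Fin 4 → ℝ} (hΔ : Δk a m (p 1) ≠ 0)
    (hS : Sigk a (p 1) (p 2) ≠ 0) (hs : Real.sin (p 2) ≠ 0) :
    gK a m p * gInv a m p = 1 := by
  have hSe := Sigk_eq a (p 1) (p 2)
  unfold gK gInv
  dsimp only
  generalize Δk a m (p 1) = D at *
  generalize Sigk a (p 1) (p 2) = S at *
  generalize Real.sin (p 2) = s at *
  generalize p 1 = r at *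
  ext i j
  -- Eliminating `r²` leaves identities in the independent quantities `a, D, S, s`.
  have hr2 : r ^ 2 = S - a ^ 2 + a ^ 2 * s ^ 2 := by linarith
  fin_cases i <;> fin_cases j <;>
    simp [Matrix.mul_apply, Fin.sum_univ_four, hS, hΔ] <;>
    (try simp only [hr2]) <;> field_simp <;> ring

/-- The components of `m` with the scalar prefactor removed. -/
def mnum (a θ : ℝ) : Fin 4 → ℂ :=
  ![Complex.I * (a : ℂ) * (Real.sin θ : ℂ), 0, 1, Complex.I / (Real.sin θ : ℂ)]

lemma mup_mul_mst (a m : ℝ) (p : Fin 4 → ℝ) (μ ν : Fin 4) :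
    mup a m p μ * mst a m p ν =
      1 / (2 * (Sigk a (p 1) (p 2) : ℂ)) *
        (mnum a (p 2) μ * starRingEnd ℂ (mnum a (p 2) ν)) := by
  have h2 : ((Real.sqrt 2 : ℝ) : ℂ) * ((Real.sqrt 2 : ℝ) : ℂ) = 2 := by
    rw [← Complex.ofReal_mul, Real.mul_self_sqrt (by norm_num)]
    norm_num
  have hden : (2 * (Sigk a (p 1) (p 2) : ℂ)) =
      ((Real.sqrt 2 : ℝ) * ((p 1 : ℂ) + Complex.I * (a : ℂ) * (Real.cos (p 2) : ℂ))) *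
      ((Real.sqrt 2 : ℝ) * ((p 1 : ℂ) - Complex.I * (a : ℂ) * (Real.cos (p 2) : ℂ))) := by
    rw [← h2, Sigk]
    push_cast
    linear_combination ((Real.sqrt 2 : ℝ) : ℂ) ^ 2 * (a : ℂ) ^ 2 * Complex.cos (p 2) ^ 2 *
      Complex.I_sq
  have hconj : starRingEnd ℂ (1 / ((Real.sqrt 2 : ℝ) *
        ((p 1 : ℂ) + Complex.I * (a : ℂ) * (Real.cos (p 2) : ℂ)))) =
      1 / ((Real.sqrt 2 : ℝ) * ((p 1 : ℂ) - Complex.I * (a : ℂ) * (Real.cos (p 2) : ℂ))) := by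
    simp only [map_div₀, map_mul, map_add, map_one, Complex.conj_ofReal, Complex.conj_I]
    congr 2
    ring
  change _ * mnum a (p 2) μ * starRingEnd ℂ (_ * mnum a (p 2) ν) = _
  rw [map_mul, hconj, hden]
  generalize (Real.sqrt 2 : ℝ) * ((p 1 : ℂ) + _) = X
  generalize (Real.sqrt 2 : ℝ) * ((p 1 : ℂ) - _) = Y
  ring

/-- At every point of the Boyer–Lindquist chart `U`, the
inverse Kerr metric matrix satisfies the completeness relation
`ḡ^{μν} = −ℓ^μ n^ν − n^μ ℓ^ν + m^μ m*^ν + m*^μ m^ν`. -/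
theorem inverse_metric_completeness (a m : ℝ) (ha : 0 < |a|) (ham : |a| < m)
    (p : Fin 4 → ℝ) (hr : rplus a m < p 1) (hθ : p 2 ∈ Set.Ioo 0 π) :
    ∀ μ ν : Fin 4,
      (((gK a m p)⁻¹ μ ν : ℝ) : ℂ) =
        -(ℓup a m p μ * nup a m p ν) - nup a m p μ * ℓup a m p ν +
          mup a m p μ * mst a m p ν + mst a m p μ * mup a m p ν := by
  have hΔ := (Δk_pos ham hr).ne'
  have hS := (Sigk_pos (p 2) ham hr).ne'
  have hs := (Real.sin_pos_of_pos_of_lt_pi hθ.1 hθ.2).ne'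
  rw [Matrix.inv_eq_right_inv (gK_mul_gInv hΔ hS hs)]
  intro μ ν
  rw [mul_comm (mst a m p μ), mup_mul_mst, mup_mul_mst]
  unfold gInv ℓup nup mnum
  generalize Δk a m (p 1) = D at *
  generalize Sigk a (p 1) (p 2) = S at *
  generalize Real.sin (p 2) = s at *
  generalize p 1 = r at *
  have hΔ' : (D : ℂ) ≠ 0 := Complex.ofReal_ne_zero.mpr hΔ
  have hS' : (S : ℂ) ≠ 0 := Complex.ofReal_ne_zero.mpr hS
  have hs' : (s : ℂ) ≠ 0 := Complex.ofReal_ne_zero.mpr hs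
  have hI : Complex.I ^ 2 = -1 := Complex.I_sq
  fin_cases μ <;> fin_cases ν <;> simp <;> field_simp <;> (try simp only [hI]) <;> ring

end KerrStmt1
end
end

section
/- (The Kinnersley tetrad of Kerr is geodesic and shear-free.) At every point of U, the spin coefficients κ := −ℓ^μ m^ν ∇̄_ν ℓ_μ, σ := −m^μ m^ν ∇̄_ν ℓ_μ, λ̂ := m*^μ m*^ν ∇̄_ν n_μ, ν̂ := m*^μ n^ν ∇̄_ν n_μ, and ε̂ := ½(−n^μ ℓ^ν ∇̄_ν ℓ_μ + m*^μ ℓ^ν ∇̄_ν m_μ) all vanish identically. -/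
/-!
Write `Z♭` for the covector field `ḡ(Z, ·)`. Since the Christoffel symbols of the second kind,
contracted with a lowered vector, are the Christoffel symbols of the first kind, no inverse metric
is needed: with `V(A, B) = V^ν ∂_ν ḡ_{ij} A^i B^j`, differentiating only the metric components,
`X^μ Y^ν ∇̄_ν (Z♭)_μ = Y^ν X^μ ∂_ν (Z♭)_μ − ½ (Y(Z, X) + X(Z, Y) − Z(Y, X))`
(`sum_Γchr_lower`, `contractCov_eq`). Only the `r`- and `θ`-derivatives of the metric survive,
because `t` and `φ` are cyclic coordinates.

With `K = 2mr/Σ` and the one-form `ω = dt − a sin²θ dφ`, the Kerr metric is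
`−dt² + sin²θ (r² + a²) dφ² + K ω² + (Σ/Δ) dr² + Σ dθ²`
(`gK_eq_gKS`), which gives closed forms `Gr`, `Gθ` for the bilinear forms `∂_r ḡ`, `∂_θ ḡ`.
They simplify on the tetrad, since `ω` annihilates `m` and `m*`, while `ω(ℓ) = Σ/Δ` and
`ω(n) = 1/2`. The lowered tetrad is also simple:
`ℓ♭ = (−1, Σ/Δ, 0, a sin²θ)`, `n♭ = (−Δ/(2Σ), −1/2, 0, (Δ/(2Σ)) a sin²θ)`, and `m♭` has no
radial component (`ℓlow_eq`, `nlow_eq`, `mlow_eq`).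

Each spin coefficient thereby becomes a rational expression in `r, a, m, sin θ, cos θ, i`, and its
vanishing a polynomial identity modulo `sin²θ + cos²θ = 1`, `i² = −1`, `Σ = r² + a² cos²θ` and
`Δ = r² − 2mr + a²`. For `ε̂` each of the two terms vanishes separately; in the second one the
derivative runs along `ℓ`, so that only the radial derivative of `m♭` enters.
-/

/-!
Statement 0: Normalization relations of the Kinnersley tetrad on the
Boyer–Lindquist chart of the Kerr metric.
-/

noncomputable section

open Real

namespace KerrStmt4

/-- `Δ(r) = r² − 2mr + a²`. -/
def Δk (a m r : ℝ) : ℝ := r ^ 2 - 2 * m * r + a ^ 2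

/-- `r₊ = m + √(m² − a²)`. -/
def rplus (a m : ℝ) : ℝ := m + Real.sqrt (m ^ 2 - a ^ 2)

/-- `Σ(r,θ) = r² + a² cos² θ`. -/
def Sigk (a r θ : ℝ) : ℝ := r ^ 2 + a ^ 2 * Real.cos θ ^ 2

/-- Kerr metric components in Boyer–Lindquist coordinates, at the point
`p = (t, r, θ, φ)` (coordinate order `t,r,θ,φ`). -/
def gK (a m : ℝ) (p : Fin 4 → ℝ) : Matrix (Fin 4) (Fin 4) ℝ :=
  let r := p 1
  let θ := p 2
  !![ -((Δk a m r - a ^ 2 * Real.sin θ ^ 2) / Sigk a r θ), 0, 0,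
        -(a * Real.sin θ ^ 2 * (r ^ 2 + a ^ 2 - Δk a m r) / Sigk a r θ);
      0, Sigk a r θ / Δk a m r, 0, 0;
      0, 0, Sigk a r θ, 0;
      -(a * Real.sin θ ^ 2 * (r ^ 2 + a ^ 2 - Δk a m r) / Sigk a r θ), 0, 0,
        ((r ^ 2 + a ^ 2) ^ 2 - Δk a m r * a ^ 2 * Real.sin θ ^ 2) * Real.sin θ ^ 2 / Sigk a r θ ]

/-- The Kinnersley tetrad vector `ℓ`. -/
def ℓup (a m : ℝ) (p : Fin 4 → ℝ) : Fin 4 → ℂ :=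
  let r := p 1
  ![(((r ^ 2 + a ^ 2) / Δk a m r : ℝ) : ℂ), 1, 0, ((a / Δk a m r : ℝ) : ℂ)]

/-- The Kinnersley tetrad vector `n`. -/
def nup (a m : ℝ) (p : Fin 4 → ℝ) : Fin 4 → ℂ :=
  let r := p 1
  let θ := p 2
  fun μ => ((1 / (2 * Sigk a r θ) : ℝ) : ℂ) *
    ![((r ^ 2 + a ^ 2 : ℝ) : ℂ), ((-(Δk a m r) : ℝ) : ℂ), 0, ((a : ℝ) : ℂ)] μ

/-- The Kinnersley tetrad vector `m`. -/
def mup (a m : ℝ) (p : Fin 4 → ℝ) : Fin 4 → ℂ :=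
  let r := p 1
  let θ := p 2
  fun μ => (1 / (Real.sqrt 2 * ((r : ℂ) + Complex.I * (a : ℂ) * (Real.cos θ : ℂ)))) *
    ![Complex.I * (a : ℂ) * (Real.sin θ : ℂ), 0, 1, Complex.I / (Real.sin θ : ℂ)] μ

/-- The componentwise complex conjugate `m*` of `m`. -/
def mst (a m : ℝ) (p : Fin 4 → ℝ) : Fin 4 → ℂ :=
  fun μ => starRingEnd ℂ (mup a m p μ)

/-- Complex-bilinear contraction with the Kerr metric:
`ḡ(X,Y) = Σ_{μ,ν} ḡ_{μν} X^μ Y^ν`. -/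
def gdot (a m : ℝ) (p : Fin 4 → ℝ) (X Y : Fin 4 → ℂ) : ℂ :=
  ∑ μ : Fin 4, ∑ ν : Fin 4, ((gK a m p μ ν : ℝ) : ℂ) * X μ * Y ν

/-- Coordinate partial derivative of a real-valued function on the chart. -/
def pd (μ : Fin 4) (f : (Fin 4 → ℝ) → ℝ) (p : Fin 4 → ℝ) : ℝ :=
  fderiv ℝ f p (Pi.single μ 1)

/-- Coordinate partial derivative of a complex-valued function on the chart. -/
def pdC (μ : Fin 4) (f : (Fin 4 → ℝ) → ℂ) (p : Fin 4 → ℝ) : ℂ :=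
  fderiv ℝ f p (Pi.single μ 1)

/-- Pointwise inverse matrix `(ḡ^{αβ})` of the Kerr metric. -/
def ginv (a m : ℝ) (p : Fin 4 → ℝ) : Matrix (Fin 4) (Fin 4) ℝ :=
  (gK a m p)⁻¹

/-- Christoffel symbols
`Γ^α_{μν} = ½ ḡ^{αβ}(∂_μ ḡ_{βν} + ∂_ν ḡ_{βμ} − ∂_β ḡ_{μν})`. -/
def Γchr (a m : ℝ) (α μ ν : Fin 4) (p : Fin 4 → ℝ) : ℝ :=
  (1 / 2) * ∑ β : Fin 4, ginv a m p α β *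
    (pd μ (fun q => gK a m q β ν) p + pd ν (fun q => gK a m q β μ) p
      - pd β (fun q => gK a m q μ ν) p)

/-- Lowered components `X_μ := ḡ_{μν} X^ν`. -/
def lower (a m : ℝ) (p : Fin 4 → ℝ) (X : Fin 4 → ℂ) : Fin 4 → ℂ :=
  fun μ => ∑ ν : Fin 4, ((gK a m p μ ν : ℝ) : ℂ) * X ν

/-- Covariant derivative `∇̄_ν X_μ := ∂_ν X_μ − Γ^α_{νμ} X_α` of a complex
covector field `X`. -/
def covD (a m : ℝ) (X : (Fin 4 → ℝ) → Fin 4 → ℂ) (ν μ : Fin 4)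
    (p : Fin 4 → ℝ) : ℂ :=
  pdC ν (fun q => X q μ) p - ∑ α : Fin 4, ((Γchr a m α ν μ p : ℝ) : ℂ) * X p α

/-- The lowered tetrad covector fields. -/
def ℓlow (a m : ℝ) (q : Fin 4 → ℝ) : Fin 4 → ℂ := lower a m q (ℓup a m q)
def nlow (a m : ℝ) (q : Fin 4 → ℝ) : Fin 4 → ℂ := lower a m q (nup a m q)
def mlow (a m : ℝ) (q : Fin 4 → ℝ) : Fin 4 → ℂ := lower a m q (mup a m q)

/-- Contraction `X^μ Y^ν ∇̄_ν Z_μ`. -/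
def contractCov (a m : ℝ) (X Y : Fin 4 → ℂ) (Z : (Fin 4 → ℝ) → Fin 4 → ℂ)
    (p : Fin 4 → ℝ) : ℂ :=
  ∑ μ : Fin 4, ∑ ν : Fin 4, X μ * Y ν * covD a m Z ν μ p

/-! ### Inverse metric and Christoffel symbols -/

/-- Coordinate derivatives of a function that, near `p`, depends on `(r, θ)` alone. -/
lemma fderiv_chart {E : Type*} [NormedAddCommGroup E] [NormedSpace ℝ E]
    (f : (Fin 4 → ℝ) → E) (F : ℝ → ℝ → E) (p : Fin 4 → ℝ)
    (hf : f =ᶠ[nhds p] fun q => F (q 1) (q 2))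
    (hF : DifferentiableAt ℝ (fun q : Fin 4 → ℝ => F (q 1) (q 2)) p) {d₁ d₂ : E}
    (h₁ : HasDerivAt (fun x => F x (p 2)) d₁ (p 1))
    (h₂ : HasDerivAt (fun y => F (p 1) y) d₂ (p 2)) (μ : Fin 4) :
    fderiv ℝ f p (Pi.single μ 1) = ![0, d₁, d₂, 0] μ := by
  rw [hf.fderiv_eq]
  have key : HasDerivAt (fun t => (fun q : Fin 4 → ℝ => F (q 1) (q 2)) (Function.update p μ t))
      (fderiv ℝ (fun q : Fin 4 → ℝ => F (q 1) (q 2)) p (Pi.single μ 1)) (p μ) := by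
    have h := hF.hasFDerivAt
    rw [← Function.update_eq_self μ p] at h
    have := h.comp_hasDerivAt (p μ) (hasDerivAt_update p μ (p μ))
    rw [Function.update_eq_self μ p] at this
    exact this
  refine key.unique ?_
  fin_cases μ
  · simpa using hasDerivAt_const (p 0) (F (p 1) (p 2))
  · simpa using h₁
  · simpa using h₂
  · simpa using hasDerivAt_const (p 3) (F (p 1) (p 2))

lemma Sigk_pos {a r : ℝ} (θ : ℝ) (hr : 0 < r) : 0 < Sigk a r θ := by
  unfold Sigk; positivity

lemma Δk_pos {a m r : ℝ} (ham : |a| < m) (hr : rplus a m < r) : 0 < Δk a m r := by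
  have h : 0 ≤ m ^ 2 - a ^ 2 := by
    have := sq_lt_sq' (by linarith [abs_nonneg a]) ham
    rw [sq_abs] at this; linarith
  have h2 := Real.sq_sqrt h
  have h3 := Real.sqrt_nonneg (m ^ 2 - a ^ 2)
  unfold rplus at hr
  unfold Δk
  nlinarith

lemma det_gK {a m : ℝ} {p : Fin 4 → ℝ} (hS : Sigk a (p 1) (p 2) ≠ 0)
    (hD : Δk a m (p 1) ≠ 0) :
    (gK a m p).det = -(Sigk a (p 1) (p 2) ^ 2 * Real.sin (p 2) ^ 2) := by
  simp [gK, Matrix.det_succ_row_zero, Fin.sum_univ_succ, Fin.succAbove]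
  field_simp
  simp only [Sigk, Real.cos_sq']
  ring

lemma gK_symm (a m : ℝ) (p : Fin 4 → ℝ) : (gK a m p).transpose = gK a m p := by
  ext i j
  fin_cases i <;> fin_cases j <;> simp [gK]

lemma sum_ginv_mul {a m : ℝ} {p : Fin 4 → ℝ} (h : (gK a m p).det ≠ 0) (β γ : Fin 4) :
    ∑ α, ginv a m p α β * gK a m p α γ = if β = γ then 1 else 0 := by
  have h1 : (ginv a m p).transpose * gK a m p = 1 := by
    rw [ginv, Matrix.transpose_nonsing_inv, gK_symm]
    exact Matrix.nonsing_inv_mul _ (isUnit_iff_ne_zero.2 h)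
  have := congrFun (congrFun h1 β) γ
  simpa [Matrix.mul_apply, Matrix.one_apply] using this

/-- Contracting the second-kind Christoffel symbols with a lowered vector gives the first-kind
symbols contracted with the vector itself. -/
lemma sum_Γchr_lower {a m : ℝ} {p : Fin 4 → ℝ} (h : (gK a m p).det ≠ 0) (X : Fin 4 → ℂ)
    (μ ν : Fin 4) :
    ∑ α, ((Γchr a m α ν μ p : ℝ) : ℂ) * lower a m p X α =
      (1 / 2) * ∑ γ, ((pd ν (fun q => gK a m q γ μ) p + pd μ (fun q => gK a m q γ ν) p
        - pd γ (fun q => gK a m q ν μ) p : ℝ) : ℂ) * X γ := by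
  set Q : Fin 4 → ℝ := fun γ => pd ν (fun q => gK a m q γ μ) p + pd μ (fun q => gK a m q γ ν) p
        - pd γ (fun q => gK a m q ν μ) p with hQ
  have h1 : ∀ α, Γchr a m α ν μ p = (1 / 2) * ∑ β, ginv a m p α β * Q β := fun α => rfl
  simp only [h1, lower]
  calc _ = (1 / 2 : ℂ) * ∑ γ, (∑ β, ((∑ α, ginv a m p α β * gK a m p α γ : ℝ) : ℂ) * Q β) * X γ := by
        push_cast
        simp only [Fin.sum_univ_four]
        ring
    _ = _ := by
        congr 1
        refine Finset.sum_congr rfl fun γ _ => ?_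
        simp [sum_ginv_mul h, apply_ite, Q]

/-! ### Derivatives of the metric -/

/-- The function `K = 2mr/Σ`. -/
def Kk (a m r θ : ℝ) : ℝ := 2 * m * r / Sigk a r θ

/-- The Kerr metric as `−dt² + sin²θ (r² + a²) dφ² + K ω² + (Σ/Δ) dr² + Σ dθ²`, where
`ω = dt − a sin²θ dφ`. -/
def gKS (a m r θ : ℝ) : Matrix (Fin 4) (Fin 4) ℝ :=
  !![-1 + Kk a m r θ, 0, 0, -(a * sin θ ^ 2 * Kk a m r θ);
    0, Sigk a r θ / Δk a m r, 0, 0;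
    0, 0, Sigk a r θ, 0;
    -(a * sin θ ^ 2 * Kk a m r θ), 0, 0,
      sin θ ^ 2 * (r ^ 2 + a ^ 2) + a ^ 2 * sin θ ^ 4 * Kk a m r θ]

lemma gK_eq_gKS {a m : ℝ} {p : Fin 4 → ℝ} (hr : 0 < p 1) :
    gK a m p = gKS a m (p 1) (p 2) := by
  have hS := (Sigk_pos (a := a) (p 2) hr).ne'
  have e : Kk a m (p 1) (p 2) * Sigk a (p 1) (p 2) = 2 * m * p 1 := div_mul_cancel₀ _ hS
  have hs : Sigk a (p 1) (p 2) = p 1 ^ 2 + a ^ 2 * (1 - sin (p 2) ^ 2) := by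
    rw [Sigk, Real.cos_sq']
  have hD : Δk a m (p 1) = p 1 ^ 2 - 2 * m * p 1 + a ^ 2 := rfl
  have e0 : -((Δk a m (p 1) - a ^ 2 * sin (p 2) ^ 2) / Sigk a (p 1) (p 2))
      = -1 + Kk a m (p 1) (p 2) := by
    rw [neg_eq_iff_eq_neg, div_eq_iff hS]
    linear_combination hD + e - hs
  have e1 : a * sin (p 2) ^ 2 * (p 1 ^ 2 + a ^ 2 - Δk a m (p 1)) / Sigk a (p 1) (p 2)
      = a * sin (p 2) ^ 2 * Kk a m (p 1) (p 2) := by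
    rw [div_eq_iff hS]
    linear_combination a * sin (p 2) ^ 2 * (-hD - e)
  have e2 : ((p 1 ^ 2 + a ^ 2) ^ 2 - Δk a m (p 1) * a ^ 2 * sin (p 2) ^ 2) * sin (p 2) ^ 2 /
      Sigk a (p 1) (p 2) =
      sin (p 2) ^ 2 * (p 1 ^ 2 + a ^ 2) + a ^ 2 * sin (p 2) ^ 4 * Kk a m (p 1) (p 2) := by
    rw [div_eq_iff hS]
    linear_combination (-a ^ 2 * sin (p 2) ^ 4) * (hD + e) -
      sin (p 2) ^ 2 * (p 1 ^ 2 + a ^ 2) * hs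
  simp only [gK, gKS, e0, e1, e2]

/-- The derivative `∂_r K`. -/
def Kr (a m r θ : ℝ) : ℝ := 2 * m / Sigk a r θ - 4 * m * r ^ 2 / Sigk a r θ ^ 2

/-- The derivative `∂_θ K`. -/
def Kθ (a m r θ : ℝ) : ℝ := 4 * m * r * a ^ 2 * cos θ * sin θ / Sigk a r θ ^ 2

/-- The matrix `∂_r ḡ`. -/
def dg₁ (a m r θ : ℝ) : Matrix (Fin 4) (Fin 4) ℝ :=
  !![Kr a m r θ, 0, 0, -(a * sin θ ^ 2 * Kr a m r θ);
    0, (2 * r * Δk a m r - Sigk a r θ * (2 * r - 2 * m)) / Δk a m r ^ 2, 0, 0;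
    0, 0, 2 * r, 0;
    -(a * sin θ ^ 2 * Kr a m r θ), 0, 0,
      2 * r * sin θ ^ 2 + a ^ 2 * sin θ ^ 4 * Kr a m r θ]

/-- The matrix `∂_θ ḡ`. -/
def dg₂ (a m r θ : ℝ) : Matrix (Fin 4) (Fin 4) ℝ :=
  !![Kθ a m r θ, 0, 0, -(a * (2 * sin θ * cos θ * Kk a m r θ + sin θ ^ 2 * Kθ a m r θ));
    0, -(2 * a ^ 2 * cos θ * sin θ) / Δk a m r, 0, 0;
    0, 0, -(2 * a ^ 2 * cos θ * sin θ), 0;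
    -(a * (2 * sin θ * cos θ * Kk a m r θ + sin θ ^ 2 * Kθ a m r θ)), 0, 0,
      2 * sin θ * cos θ * (r ^ 2 + a ^ 2) +
        a ^ 2 * (4 * sin θ ^ 3 * cos θ * Kk a m r θ + sin θ ^ 4 * Kθ a m r θ)]

/-- The matrix `∂_μ ḡ`, which is zero for `μ = t, φ`. -/
def dg (a m r θ : ℝ) (μ : Fin 4) : Matrix (Fin 4) (Fin 4) ℝ :=
  ![0, dg₁ a m r θ, dg₂ a m r θ, 0] μ

lemma hasDerivAt_Sigk_r (a r θ : ℝ) : HasDerivAt (fun x => Sigk a x θ) (2 * r) r := by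
  simpa [Sigk] using (hasDerivAt_pow 2 r).add_const (a ^ 2 * cos θ ^ 2)

lemma hasDerivAt_Sigk_θ (a r θ : ℝ) :
    HasDerivAt (fun y => Sigk a r y) (-(2 * a ^ 2 * cos θ * sin θ)) θ := by
  refine ((((hasDerivAt_cos θ).pow 2).const_mul (a ^ 2)).const_add (r ^ 2)).congr_deriv ?_
  simp; ring

lemma hasDerivAt_Δk (a m r : ℝ) : HasDerivAt (Δk a m) (2 * r - 2 * m) r := by
  refine ((((hasDerivAt_id r).pow 2).sub ((hasDerivAt_id r).const_mul (2 * m))).add_const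
    (a ^ 2)).congr_deriv ?_
  simp

lemma hasDerivAt_Kk_r {a m r θ : ℝ} (hS : Sigk a r θ ≠ 0) :
    HasDerivAt (fun x => Kk a m x θ) (Kr a m r θ) r := by
  refine (((hasDerivAt_id r).const_mul (2 * m)).div (hasDerivAt_Sigk_r a r θ) hS).congr_deriv ?_
  simp only [Kr, id]; field_simp; ring

lemma hasDerivAt_Kk_θ {a m r θ : ℝ} (hS : Sigk a r θ ≠ 0) :
    HasDerivAt (fun y => Kk a m r y) (Kθ a m r θ) θ := by
  refine ((hasDerivAt_const θ (2 * m * r)).div (hasDerivAt_Sigk_θ a r θ) hS).congr_deriv ?_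
  simp only [Kθ]; ring

lemma hasDerivAt_gKS_r {a m r θ : ℝ} (hS : Sigk a r θ ≠ 0) (hD : Δk a m r ≠ 0) (i j : Fin 4) :
    HasDerivAt (fun x => gKS a m x θ i j) (dg₁ a m r θ i j) r := by
  have hK := hasDerivAt_Kk_r (m := m) hS
  have h0 := hasDerivAt_const r (0 : ℝ)
  have h1 := (hK.const_mul (a * sin θ ^ 2)).neg
  have h2 : HasDerivAt (fun x => sin θ ^ 2 * (x ^ 2 + a ^ 2) + a ^ 2 * sin θ ^ 4 * Kk a m x θ)
      (2 * r * sin θ ^ 2 + a ^ 2 * sin θ ^ 4 * Kr a m r θ) r := by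
    refine ((((hasDerivAt_pow 2 r).add_const (a ^ 2)).const_mul (sin θ ^ 2)).add
      (hK.const_mul (a ^ 2 * sin θ ^ 4))).congr_deriv ?_
    simp; ring
  have h3 := (hasDerivAt_Sigk_r a r θ).div (hasDerivAt_Δk a m r) hD
  fin_cases i <;> fin_cases j <;>
    first
    | exact h0
    | exact hK.const_add (-1)
    | exact h1
    | exact h2
    | exact h3
    | exact hasDerivAt_Sigk_r a r θ

lemma hasDerivAt_gKS_θ {a m r θ : ℝ} (hS : Sigk a r θ ≠ 0) (i j : Fin 4) :
    HasDerivAt (fun y => gKS a m r y i j) (dg₂ a m r θ i j) θ := by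
  have hK := hasDerivAt_Kk_θ (m := m) hS
  have hs := hasDerivAt_sin θ
  have h0 := hasDerivAt_const θ (0 : ℝ)
  have h1 : HasDerivAt (fun y => -(a * sin y ^ 2 * Kk a m r y))
      (-(a * (2 * sin θ * cos θ * Kk a m r θ + sin θ ^ 2 * Kθ a m r θ))) θ := by
    refine ((((hs.pow 2).const_mul a).mul hK).neg).congr_deriv ?_
    simp; ring
  have h2 : HasDerivAt (fun y => sin y ^ 2 * (r ^ 2 + a ^ 2) + a ^ 2 * sin y ^ 4 * Kk a m r y)
      (2 * sin θ * cos θ * (r ^ 2 + a ^ 2) +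
        a ^ 2 * (4 * sin θ ^ 3 * cos θ * Kk a m r θ + sin θ ^ 4 * Kθ a m r θ)) θ := by
    refine (((hs.pow 2).mul_const (r ^ 2 + a ^ 2)).add
      (((hs.pow 4).const_mul (a ^ 2)).mul hK)).congr_deriv ?_
    simp; ring
  have h3 := (hasDerivAt_Sigk_θ a r θ).div_const (Δk a m r)
  fin_cases i <;> fin_cases j <;>
    first
    | exact h0
    | exact hK.const_add (-1)
    | exact h1
    | exact h2
    | exact h3
    | exact hasDerivAt_Sigk_θ a r θ

lemma differentiableAt_gKS {a m : ℝ} {p : Fin 4 → ℝ} (hS : Sigk a (p 1) (p 2) ≠ 0)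
    (hD : Δk a m (p 1) ≠ 0) (i j : Fin 4) :
    DifferentiableAt ℝ (fun q : Fin 4 → ℝ => gKS a m (q 1) (q 2) i j) p := by
  unfold Sigk at hS
  unfold Δk at hD
  have hK : DifferentiableAt ℝ (fun q : Fin 4 → ℝ => Kk a m (q 1) (q 2)) p := by
    simp only [Kk, Sigk]; fun_prop (disch := assumption)
  have h0 := differentiableAt_const (𝕜 := ℝ) (x := p) (0 : ℝ)
  have hSig : DifferentiableAt ℝ (fun q : Fin 4 → ℝ => Sigk a (q 1) (q 2)) p := by
    simp only [Sigk]; fun_prop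
  have h1 : DifferentiableAt ℝ
      (fun q : Fin 4 → ℝ => -(a * sin (q 2) ^ 2 * Kk a m (q 1) (q 2))) p := by fun_prop
  have h2 : DifferentiableAt ℝ (fun q : Fin 4 → ℝ => sin (q 2) ^ 2 * (q 1 ^ 2 + a ^ 2) +
      a ^ 2 * sin (q 2) ^ 4 * Kk a m (q 1) (q 2)) p := by fun_prop
  have h3 : DifferentiableAt ℝ
      (fun q : Fin 4 → ℝ => Sigk a (q 1) (q 2) / Δk a m (q 1)) p := by
    simp only [Sigk, Δk]; fun_prop (disch := assumption)
  fin_cases i <;> fin_cases j <;>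
    first
    | exact h0
    | exact hK.const_add (-1)
    | exact h1
    | exact h2
    | exact h3
    | exact hSig

lemma eventually_chart {a m : ℝ} {p : Fin 4 → ℝ} (hr : 0 < p 1) (hD : 0 < Δk a m (p 1)) :
    ∀ᶠ q : Fin 4 → ℝ in nhds p, 0 < q 1 ∧ 0 < Δk a m (q 1) := by
  have h1 : Continuous fun q : Fin 4 → ℝ => q 1 := by fun_prop
  have h2 : Continuous fun q : Fin 4 → ℝ => Δk a m (q 1) := by unfold Δk; fun_prop
  exact (h1.continuousAt.eventually (lt_mem_nhds hr)).and
    (h2.continuousAt.eventually (lt_mem_nhds hD))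

lemma pd_gK {a m : ℝ} {p : Fin 4 → ℝ} (hr : 0 < p 1) (hD : 0 < Δk a m (p 1)) (μ i j : Fin 4) :
    pd μ (fun q => gK a m q i j) p = dg a m (p 1) (p 2) μ i j := by
  have hS := (Sigk_pos (a := a) (p 2) hr).ne'
  rw [pd, fderiv_chart _ (fun x y => gKS a m x y i j) p
    ((eventually_chart hr hD).mono fun q hq => by simp only [gK_eq_gKS hq.1])
    (differentiableAt_gKS hS hD.ne' i j) (hasDerivAt_gKS_r hS hD.ne' i j)
    (hasDerivAt_gKS_θ hS i j)]
  fin_cases μ <;> rfl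

/-! ### The lowered tetrad -/

/-- Closed form of the lowered vector `ℓ_μ`. -/
def ℓR (a m r θ : ℝ) : Fin 4 → ℝ := ![-1, Sigk a r θ / Δk a m r, 0, a * sin θ ^ 2]

/-- Closed form of the lowered vector `n_μ`. -/
def nR (a m r θ : ℝ) : Fin 4 → ℝ :=
  ![-(Δk a m r / (2 * Sigk a r θ)), -(1 / 2), 0, Δk a m r / (2 * Sigk a r θ) * (a * sin θ ^ 2)]

/-- The complex radius `r + i a cos θ`, whose squared modulus is `Σ`. -/
def ρk (a r θ : ℝ) : ℂ := r + Complex.I * a * (cos θ : ℝ)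

/-- Closed form of the lowered vector `m_μ`. -/
def mC (a r θ : ℝ) : Fin 4 → ℂ :=
  ![1 / (√2 : ℝ) * (-(Complex.I * a * (sin θ : ℝ)) / ρk a r θ), 0,
    1 / (√2 : ℝ) * (r - Complex.I * a * (cos θ : ℝ)),
    1 / (√2 : ℝ) * (Complex.I * (r ^ 2 + a ^ 2) * (sin θ : ℝ) / ρk a r θ)]

lemma ρk_ne {a r : ℝ} (θ : ℝ) (hr : 0 < r) : ρk a r θ ≠ 0 := by
  intro h
  have := congrArg Complex.re h
  simp [ρk] at this
  exact hr.ne' this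

lemma Sigk_eq_ρk (a r θ : ℝ) :
    ((Sigk a r θ : ℝ) : ℂ) = ρk a r θ * (r - Complex.I * a * (cos θ : ℝ)) := by
  simp only [Sigk, ρk]; push_cast
  linear_combination (a ^ 2 * Complex.cos θ ^ 2 : ℂ) * Complex.I_sq

lemma KS {a m r θ : ℝ} (hr : 0 < r) : Kk a m r θ * Sigk a r θ = 2 * m * r :=
  div_mul_cancel₀ _ (Sigk_pos θ hr).ne'

lemma Δk_eq {a m r θ : ℝ} (hr : 0 < r) :
    Δk a m r = Sigk a r θ + a ^ 2 * sin θ ^ 2 - Kk a m r θ * Sigk a r θ := by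
  rw [KS hr, Δk, Sigk, Real.cos_sq']; ring

lemma r2_eq (a r θ : ℝ) : r ^ 2 + a ^ 2 = Sigk a r θ + a ^ 2 * sin θ ^ 2 := by
  rw [Sigk, Real.cos_sq']; ring

lemma ℓlow_eq {a m : ℝ} {q : Fin 4 → ℝ} (hr : 0 < q 1) (hD : 0 < Δk a m (q 1)) (i : Fin 4) :
    ℓlow a m q i = ((ℓR a m (q 1) (q 2) i : ℝ) : ℂ) := by
  have e := r2_eq a (q 1) (q 2)
  have hΔ := Δk_eq (a := a) (m := m) (θ := q 2) hr
  have hD' := hD.ne'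
  have h : ℓlow a m q i = ((∑ j, gKS a m (q 1) (q 2) i j *
      ![(q 1 ^ 2 + a ^ 2) / Δk a m (q 1), 1, 0, a / Δk a m (q 1)] j : ℝ) : ℂ) := by
    rw [ℓlow, lower, gK_eq_gKS hr]
    simp [Fin.sum_univ_four, ℓup]
  rw [h]
  congr 1
  rw [e]
  generalize Δk a m (q 1) = D at *
  fin_cases i <;> simp [Fin.sum_univ_four, gKS, ℓR, e] <;> field_simp <;> rw [hΔ] <;> ring

lemma nlow_eq {a m : ℝ} {q : Fin 4 → ℝ} (hr : 0 < q 1) (hD : 0 < Δk a m (q 1)) (i : Fin 4) :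
    nlow a m q i = ((nR a m (q 1) (q 2) i : ℝ) : ℂ) := by
  have e := r2_eq a (q 1) (q 2)
  have hΔ := Δk_eq (a := a) (m := m) (θ := q 2) hr
  have hD' := hD.ne'
  have hS := (Sigk_pos (a := a) (q 2) hr).ne'
  have h : nlow a m q i = ((∑ j, gKS a m (q 1) (q 2) i j * (1 / (2 * Sigk a (q 1) (q 2)) *
      ![q 1 ^ 2 + a ^ 2, -Δk a m (q 1), 0, a] j) : ℝ) : ℂ) := by
    rw [nlow, lower, gK_eq_gKS hr]
    simp [Fin.sum_univ_four, nup]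
  rw [h]
  congr 1
  rw [e]
  fin_cases i <;> simp [Fin.sum_univ_four, gKS, nR, e] <;> field_simp <;> rw [hΔ] <;> ring

lemma mlow_eq {a m : ℝ} {q : Fin 4 → ℝ} (hr : 0 < q 1) (hs : sin (q 2) ≠ 0) (i : Fin 4) :
    mlow a m q i = mC a (q 1) (q 2) i := by
  have hs' : ((sin (q 2) : ℝ) : ℂ) ≠ 0 := by exact_mod_cast hs
  have e : ((q 1 : ℂ) ^ 2 + a ^ 2) = Sigk a (q 1) (q 2) + a ^ 2 * (sin (q 2) : ℝ) ^ 2 := by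
    exact_mod_cast r2_eq a (q 1) (q 2)
  have hρ := ρk_ne (a := a) (q 2) hr
  have h2 : ((√2 : ℝ) : ℂ) ≠ 0 := by simp
  have hSρ := Sigk_eq_ρk a (q 1) (q 2)
  have h : mlow a m q i = ∑ j, ((gKS a m (q 1) (q 2) i j : ℝ) : ℂ) *
      (1 / ((√2 : ℝ) * ρk a (q 1) (q 2)) * ![Complex.I * a * (sin (q 2) : ℝ), 0, 1,
        Complex.I / (sin (q 2) : ℝ)] j) := by
    rw [mlow, lower, gK_eq_gKS hr]
    rfl
  rw [h]
  generalize hc : sin (q 2) = s at *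
  fin_cases i
  · simp [Fin.sum_univ_four, gKS, mC, hc, -one_div]; field_simp; ring
  · simp [Fin.sum_univ_four, gKS, mC, hc]
  · simp [Fin.sum_univ_four, gKS, mC, hc, -one_div]; field_simp; rw [hSρ]; simp
  · simp [Fin.sum_univ_four, gKS, mC, hc, e, -one_div]; field_simp; ring

/-! ### Derivatives of the lowered tetrad -/

/-- The derivative `∂_ν ℓ_i`. -/
def dℓ (a m r θ : ℝ) (ν : Fin 4) : Fin 4 → ℝ :=
  ![0, ![0, (2 * r * Δk a m r - Sigk a r θ * (2 * r - 2 * m)) / Δk a m r ^ 2, 0, 0],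
    ![0, -(2 * a ^ 2 * cos θ * sin θ) / Δk a m r, 0, 2 * a * sin θ * cos θ], 0] ν

/-- The derivative `∂_r H` of `H = Δ/(2Σ)`. -/
def Hr (a m r θ : ℝ) : ℝ :=
  (2 * r - 2 * m) / (2 * Sigk a r θ) - r * Δk a m r / Sigk a r θ ^ 2

/-- The derivative `∂_θ H` of `H = Δ/(2Σ)`. -/
def Hθ (a m r θ : ℝ) : ℝ := Δk a m r * a ^ 2 * cos θ * sin θ / Sigk a r θ ^ 2

/-- The derivative `∂_ν n_i`. -/
def dn (a m r θ : ℝ) (ν : Fin 4) : Fin 4 → ℝ :=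
  ![0, ![-Hr a m r θ, 0, 0, Hr a m r θ * (a * sin θ ^ 2)],
    ![-Hθ a m r θ, 0, 0, Hθ a m r θ * (a * sin θ ^ 2) +
      Δk a m r / (2 * Sigk a r θ) * (2 * a * sin θ * cos θ)], 0] ν

/-- The derivative `∂_r m_i`. -/
def dmr (a r θ : ℝ) : Fin 4 → ℂ :=
  ![1 / (√2 : ℝ) * (Complex.I * a * (sin θ : ℝ) / ρk a r θ ^ 2), 0, 1 / (√2 : ℝ),
    1 / (√2 : ℝ) * (Complex.I * (sin θ : ℝ) * (2 * r * ρk a r θ - (r ^ 2 + a ^ 2)) /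
      ρk a r θ ^ 2)]

lemma pdC_ofReal (f : (Fin 4 → ℝ) → ℂ) (F : ℝ → ℝ → ℝ) (p : Fin 4 → ℝ)
    (hf : f =ᶠ[nhds p] fun q => ((F (q 1) (q 2) : ℝ) : ℂ))
    (hF : DifferentiableAt ℝ (fun q : Fin 4 → ℝ => F (q 1) (q 2)) p) {d₁ d₂ : ℝ}
    (h₁ : HasDerivAt (fun x => F x (p 2)) d₁ (p 1))
    (h₂ : HasDerivAt (fun y => F (p 1) y) d₂ (p 2)) (μ : Fin 4) :
    pdC μ f p = ((![0, d₁, d₂, 0] μ : ℝ) : ℂ) := by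
  rw [pdC, fderiv_chart f (fun x y => ((F x y : ℝ) : ℂ)) p hf
    (Complex.ofRealCLM.differentiableAt.comp p hF) h₁.ofReal_comp h₂.ofReal_comp]
  fin_cases μ <;> simp

lemma pdC_ℓlow {a m : ℝ} {p : Fin 4 → ℝ} (hr : 0 < p 1) (hD : 0 < Δk a m (p 1))
    (ν i : Fin 4) :
    pdC ν (fun q => ℓlow a m q i) p = ((dℓ a m (p 1) (p 2) ν i : ℝ) : ℂ) := by
  have hD' : p 1 ^ 2 - 2 * m * p 1 + a ^ 2 ≠ 0 := hD.ne'
  have hev : (fun q => ℓlow a m q i) =ᶠ[nhds p] fun q => ((ℓR a m (q 1) (q 2) i : ℝ) : ℂ) :=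
    (eventually_chart hr hD).mono fun q hq => ℓlow_eq hq.1 hq.2 i
  have h1 : HasDerivAt (fun x => ℓR a m x (p 2) i) (dℓ a m (p 1) (p 2) 1 i) (p 1) := by
    fin_cases i
    · exact hasDerivAt_const _ _
    · exact (hasDerivAt_Sigk_r a (p 1) (p 2)).div (hasDerivAt_Δk a m (p 1)) hD.ne'
    · exact hasDerivAt_const _ _
    · exact hasDerivAt_const _ _
  have h2 : HasDerivAt (fun y => ℓR a m (p 1) y i) (dℓ a m (p 1) (p 2) 2 i) (p 2) := by
    fin_cases i
    · exact hasDerivAt_const _ _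
    · exact (hasDerivAt_Sigk_θ a (p 1) (p 2)).div_const _
    · exact hasDerivAt_const _ _
    · exact (((hasDerivAt_sin (p 2)).pow 2).const_mul a).congr_deriv (by simp [dℓ]; ring)
  have hd : DifferentiableAt ℝ (fun q : Fin 4 → ℝ => ℓR a m (q 1) (q 2) i) p := by
    fin_cases i
    · exact differentiableAt_const _
    · change DifferentiableAt ℝ (fun q : Fin 4 → ℝ => Sigk a (q 1) (q 2) / Δk a m (q 1)) p
      simp only [Sigk, Δk]; fun_prop (disch := assumption)
    · exact differentiableAt_const _
    · change DifferentiableAt ℝ (fun q : Fin 4 → ℝ => a * sin (q 2) ^ 2) p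
      fun_prop
  rw [pdC_ofReal _ (fun x y => ℓR a m x y i) p hev hd h1 h2]
  fin_cases ν <;> rfl

lemma pdC_nlow {a m : ℝ} {p : Fin 4 → ℝ} (hr : 0 < p 1) (hD : 0 < Δk a m (p 1))
    (ν i : Fin 4) :
    pdC ν (fun q => nlow a m q i) p = ((dn a m (p 1) (p 2) ν i : ℝ) : ℂ) := by
  have hS := (Sigk_pos (a := a) (p 2) hr).ne'
  have hev : (fun q => nlow a m q i) =ᶠ[nhds p] fun q => ((nR a m (q 1) (q 2) i : ℝ) : ℂ) :=
    (eventually_chart hr hD).mono fun q hq => nlow_eq hq.1 hq.2 i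
  have hH1 : HasDerivAt (fun x => Δk a m x / (2 * Sigk a x (p 2))) (Hr a m (p 1) (p 2)) (p 1) := by
    refine ((hasDerivAt_Δk a m (p 1)).div ((hasDerivAt_Sigk_r a (p 1) (p 2)).const_mul 2)
      (mul_ne_zero two_ne_zero hS)).congr_deriv ?_
    simp only [Hr]; field_simp
  have hH2 : HasDerivAt (fun y => Δk a m (p 1) / (2 * Sigk a (p 1) y)) (Hθ a m (p 1) (p 2))
      (p 2) := by
    refine ((hasDerivAt_const (p 2) (Δk a m (p 1))).div
      ((hasDerivAt_Sigk_θ a (p 1) (p 2)).const_mul 2)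
      (mul_ne_zero two_ne_zero hS)).congr_deriv ?_
    simp only [Hθ]; field_simp; ring
  have h1 : HasDerivAt (fun x => nR a m x (p 2) i) (dn a m (p 1) (p 2) 1 i) (p 1) := by
    fin_cases i
    · exact hH1.neg
    · exact hasDerivAt_const _ _
    · exact hasDerivAt_const _ _
    · exact hH1.mul_const _
  have h2 : HasDerivAt (fun y => nR a m (p 1) y i) (dn a m (p 1) (p 2) 2 i) (p 2) := by
    fin_cases i
    · exact hH2.neg
    · exact hasDerivAt_const _ _
    · exact hasDerivAt_const _ _
    · exact (hH2.mul (((hasDerivAt_sin (p 2)).pow 2).const_mul a)).congr_deriv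
        (by simp [dn]; left; ring)
  have hd : DifferentiableAt ℝ (fun q : Fin 4 → ℝ => nR a m (q 1) (q 2) i) p := by
    have hH : DifferentiableAt ℝ
        (fun q : Fin 4 → ℝ => Δk a m (q 1) / (2 * Sigk a (q 1) (q 2))) p := by
      have hS' := mul_ne_zero two_ne_zero hS
      simp only [Sigk, Δk] at hS' ⊢; fun_prop (disch := assumption)
    fin_cases i
    · exact hH.neg
    · exact differentiableAt_const _
    · exact differentiableAt_const _
    · exact hH.mul (by fun_prop)
  rw [pdC_ofReal _ (fun x y => nR a m x y i) p hev hd h1 h2]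
  fin_cases ν <;> rfl

/-- All coordinate derivatives of `m_i` except the one along `θ`. -/
lemma pdC_mlow_r {a m : ℝ} {p : Fin 4 → ℝ} (hr : 0 < p 1) (hs : sin (p 2) ≠ 0) (ν i : Fin 4)
    (hν : ν ≠ 2) :
    pdC ν (fun q => mlow a m q i) p = if ν = 1 then dmr a (p 1) (p 2) i else 0 := by
  have hρ := ρk_ne (a := a) (p 2) hr
  have hev : (fun q => mlow a m q i) =ᶠ[nhds p] fun q => mC a (q 1) (q 2) i := by
    have c1 : Continuous fun q : Fin 4 → ℝ => q 1 := by fun_prop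
    have c2 : Continuous fun q : Fin 4 → ℝ => sin (q 2) := by fun_prop
    filter_upwards [c1.continuousAt.eventually (lt_mem_nhds hr),
      c2.continuousAt.eventually_ne hs] with q h1 h2 using mlow_eq h1 h2 i
  have hd : DifferentiableAt ℝ (fun q : Fin 4 → ℝ => mC a (q 1) (q 2) i) p := by
    have cr : DifferentiableAt ℝ (fun q : Fin 4 → ℝ => ((q 1 : ℝ) : ℂ)) p :=
      Complex.ofRealCLM.differentiableAt.comp p (by fun_prop)
    have cs : DifferentiableAt ℝ (fun q : Fin 4 → ℝ => ((sin (q 2) : ℝ) : ℂ)) p :=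
      Complex.ofRealCLM.differentiableAt.comp p
        (show DifferentiableAt ℝ (fun q : Fin 4 → ℝ => sin (q 2)) p by fun_prop)
    have cc : DifferentiableAt ℝ (fun q : Fin 4 → ℝ => ((cos (q 2) : ℝ) : ℂ)) p :=
      Complex.ofRealCLM.differentiableAt.comp p
        (show DifferentiableAt ℝ (fun q : Fin 4 → ℝ => cos (q 2)) p by fun_prop)
    have cρ : DifferentiableAt ℝ (fun q : Fin 4 → ℝ => ρk a (q 1) (q 2)) p :=
      cr.add (cc.const_mul _)
    have cdiv : ∀ f : (Fin 4 → ℝ) → ℂ, DifferentiableAt ℝ f p →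
        DifferentiableAt ℝ (fun q => f q / ρk a (q 1) (q 2)) p := fun f hf => by
      simp only [div_eq_mul_inv]; exact hf.mul (cρ.fun_inv hρ)
    fin_cases i
    · exact (cdiv _ (cs.const_mul _).neg).const_mul _
    · exact differentiableAt_const _
    · exact (cr.sub (cc.const_mul _)).const_mul _
    · exact (cdiv _ ((((cr.pow 2).add_const _).const_mul _).mul cs)).const_mul _
  have h1 : HasDerivAt (fun x => mC a x (p 2) i) (dmr a (p 1) (p 2) i) (p 1) := by
    have cr : HasDerivAt (fun x : ℝ => (x : ℂ)) 1 (p 1) := by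
      simpa using (hasDerivAt_id (p 1)).ofReal_comp
    have cρ : HasDerivAt (fun x : ℝ => ρk a x (p 2)) 1 (p 1) := cr.add_const _
    fin_cases i
    · exact (((hasDerivAt_const (p 1) _).div cρ hρ).const_mul _).congr_deriv (by simp [dmr])
    · exact hasDerivAt_const _ _
    · exact ((cr.sub_const _).const_mul _).congr_deriv (by simp [dmr])
    · exact (((((cr.pow 2).add_const _).const_mul _).mul_const _ |>.div cρ hρ).const_mul
        _).congr_deriv (by simp [dmr]; ring)
  have h2 : HasDerivAt (fun y => mC a (p 1) y i)
      (deriv (fun y => mC a (p 1) y i) (p 2)) (p 2) := by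
    have hu := (hasDerivAt_update p 2 (p 2)).differentiableAt
    rw [← Function.update_eq_self 2 p] at hd
    have := (hd.comp (p 2) hu).hasDerivAt
    simpa [Function.comp_def] using this
  rw [pdC, fderiv_chart _ (fun x y => mC a x y i) p hev hd h1 h2]
  fin_cases ν <;> simp at hν ⊢

/-! ### The Koszul formula -/

/-- The one-form `ω = dt − a sin²θ dφ` evaluated on `X`. -/
def ωk (a θ : ℝ) (X : Fin 4 → ℂ) : ℂ := X 0 - a * (sin θ : ℝ) ^ 2 * X 3

/-- The bilinear form `(∂_r ḡ)(X, Y)`. -/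
def Gr (a m r θ : ℝ) (X Y : Fin 4 → ℂ) : ℂ :=
  2 * r * (sin θ : ℝ) ^ 2 * X 3 * Y 3 + (Kr a m r θ : ℝ) * ωk a θ X * ωk a θ Y +
    ((2 * r * Δk a m r - Sigk a r θ * (2 * r - 2 * m)) / Δk a m r ^ 2 : ℝ) * X 1 * Y 1 +
    2 * r * X 2 * Y 2

/-- The bilinear form `(∂_θ ḡ)(X, Y)`. -/
def Gθ (a m r θ : ℝ) (X Y : Fin 4 → ℂ) : ℂ :=
  2 * (sin θ : ℝ) * (cos θ : ℝ) * (r ^ 2 + a ^ 2) * X 3 * Y 3 +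
    (Kθ a m r θ : ℝ) * ωk a θ X * ωk a θ Y -
    2 * a * (sin θ : ℝ) * (cos θ : ℝ) * (Kk a m r θ : ℝ) * (X 3 * ωk a θ Y + ωk a θ X * Y 3) -
    2 * a ^ 2 * (cos θ : ℝ) * (sin θ : ℝ) / (Δk a m r : ℝ) * X 1 * Y 1 -
    2 * a ^ 2 * (cos θ : ℝ) * (sin θ : ℝ) * X 2 * Y 2

lemma sum_dg₁ (a m r θ : ℝ) (X Y : Fin 4 → ℂ) :
    ∑ i, ∑ j, ((dg₁ a m r θ i j : ℝ) : ℂ) * X i * Y j = Gr a m r θ X Y := by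
  simp only [Fin.sum_univ_four]
  simp only [dg₁, Gr, ωk, Matrix.of_apply, Matrix.cons_val]
  push_cast; ring

lemma sum_dg₂ (a m r θ : ℝ) (X Y : Fin 4 → ℂ) :
    ∑ i, ∑ j, ((dg₂ a m r θ i j : ℝ) : ℂ) * X i * Y j = Gθ a m r θ X Y := by
  simp only [Fin.sum_univ_four]
  simp only [dg₂, Gθ, ωk, Matrix.of_apply, Matrix.cons_val]
  push_cast; ring

lemma sum_dg (a m r θ : ℝ) (V X Y : Fin 4 → ℂ) :
    ∑ ν, V ν * ∑ i, ∑ j, ((dg a m r θ ν i j : ℝ) : ℂ) * X i * Y j =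
      V 1 * Gr a m r θ X Y + V 2 * Gθ a m r θ X Y := by
  rw [Fin.sum_univ_four, ← sum_dg₁, ← sum_dg₂]
  have h0 : ∀ i j, dg a m r θ 0 i j = 0 := fun _ _ => rfl
  have h3 : ∀ i j, dg a m r θ 3 i j = 0 := fun _ _ => rfl
  have h1 : dg a m r θ 1 = dg₁ a m r θ := rfl
  have h2 : dg a m r θ 2 = dg₂ a m r θ := rfl
  simp only [h0, h3, h1, h2]
  simp

/-- The first-kind Christoffel contraction, regrouped by the index of differentiation. The array
`g ν i j` plays the role of `∂_ν ḡ_{ij}`; symmetry in `i, j` is not needed. -/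
lemma koszul_sum (g : Fin 4 → Fin 4 → Fin 4 → ℂ) (d : Fin 4 → Fin 4 → ℂ) (X Y Z : Fin 4 → ℂ) :
    ∑ μ, ∑ ν, X μ * Y ν * (d ν μ - (1 / 2) * ∑ γ, (g ν γ μ + g μ γ ν - g γ ν μ) * Z γ) =
      ∑ ν, Y ν * ∑ μ, X μ * d ν μ - (1 / 2) * (∑ ν, Y ν * ∑ i, ∑ j, g ν i j * Z i * X j +
        ∑ ν, X ν * ∑ i, ∑ j, g ν i j * Z i * Y j - ∑ ν, Z ν * ∑ i, ∑ j, g ν i j * Y i * X j) := by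
  simp only [Fin.sum_univ_four]
  ring

lemma contractCov_lower {a m : ℝ} {p : Fin 4 → ℝ} (hr : 0 < p 1) (hD : 0 < Δk a m (p 1))
    (hs : sin (p 2) ≠ 0) (X Y : Fin 4 → ℂ) (Z : (Fin 4 → ℝ) → Fin 4 → ℂ) :
    contractCov a m X Y (fun q => lower a m q (Z q)) p =
      ∑ μ, ∑ ν, X μ * Y ν * (pdC ν (fun q => lower a m q (Z q) μ) p -
        (1 / 2) * ∑ γ, ((dg a m (p 1) (p 2) ν γ μ + dg a m (p 1) (p 2) μ γ ν
          - dg a m (p 1) (p 2) γ ν μ : ℝ) : ℂ) * Z p γ) := by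
  have hS := (Sigk_pos (a := a) (p 2) hr).ne'
  have hdet : (gK a m p).det ≠ 0 := by
    rw [det_gK hS hD.ne']
    exact neg_ne_zero.2 (mul_ne_zero (pow_ne_zero _ hS) (pow_ne_zero _ hs))
  simp only [contractCov, covD, sum_Γchr_lower hdet, pd_gK hr hD]

/-- The Koszul formula for `X^μ Y^ν ∇̄_ν Z_μ` with `Z_μ` the lowering of a vector field `Z`. -/
lemma contractCov_eq {a m : ℝ} {p : Fin 4 → ℝ} (hr : 0 < p 1) (hD : 0 < Δk a m (p 1))
    (hs : sin (p 2) ≠ 0) (X Y : Fin 4 → ℂ) (Z : (Fin 4 → ℝ) → Fin 4 → ℂ) :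
    contractCov a m X Y (fun q => lower a m q (Z q)) p =
      ∑ ν, Y ν * ∑ μ, X μ * pdC ν (fun q => lower a m q (Z q) μ) p - (1 / 2) *
        ((Y 1 * Gr a m (p 1) (p 2) (Z p) X + Y 2 * Gθ a m (p 1) (p 2) (Z p) X) +
         (X 1 * Gr a m (p 1) (p 2) (Z p) Y + X 2 * Gθ a m (p 1) (p 2) (Z p) Y) -
         (Z p 1 * Gr a m (p 1) (p 2) Y X + Z p 2 * Gθ a m (p 1) (p 2) Y X)) := by
  rw [contractCov_lower hr hD hs]
  simp only [← sum_dg]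
  rw [← koszul_sum]
  push_cast
  rfl

/-! ### Vanishing of the spin coefficients -/

/-- (The Kinnersley tetrad of Kerr is geodesic and
shear-free.) The spin coefficients `κ, σ, λ̂, ν̂, ε̂` vanish identically on the
Boyer–Lindquist chart. -/
theorem kinnersley_geodesic_shearfree (a m : ℝ) (ha : 0 < |a|) (ham : |a| < m)
    (p : Fin 4 → ℝ) (hr : rplus a m < p 1) (hθ : p 2 ∈ Set.Ioo 0 π) :
    -- κ := −ℓ^μ m^ν ∇̄_ν ℓ_μ
    (-contractCov a m (ℓup a m p) (mup a m p) (ℓlow a m) p = 0) ∧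
    -- σ := −m^μ m^ν ∇̄_ν ℓ_μ
    (-contractCov a m (mup a m p) (mup a m p) (ℓlow a m) p = 0) ∧
    -- λ̂ := m*^μ m*^ν ∇̄_ν n_μ
    (contractCov a m (mst a m p) (mst a m p) (nlow a m) p = 0) ∧
    -- ν̂ := m*^μ n^ν ∇̄_ν n_μ
    (contractCov a m (mst a m p) (nup a m p) (nlow a m) p = 0) ∧
    -- ε̂ := ½(−n^μ ℓ^ν ∇̄_ν ℓ_μ + m*^μ ℓ^ν ∇̄_ν m_μ)
    ((1 / 2 : ℂ) * (-contractCov a m (nup a m p) (ℓup a m p) (ℓlow a m) p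
        + contractCov a m (mst a m p) (ℓup a m p) (mlow a m) p) = 0) := by
  have hD := Δk_pos ham hr
  have hr0 : 0 < p 1 := by
    have := Real.sqrt_nonneg (m ^ 2 - a ^ 2)
    have := abs_nonneg a
    unfold rplus at hr; linarith
  have hs : 0 < sin (p 2) := sin_pos_of_mem_Ioo hθ
  have hℓ : ∀ X Y, contractCov a m X Y (ℓlow a m) p = _ :=
    fun X Y => contractCov_eq hr0 hD hs.ne' X Y (ℓup a m)
  have hn : ∀ X Y, contractCov a m X Y (nlow a m) p = _ :=
    fun X Y => contractCov_eq hr0 hD hs.ne' X Y (nup a m)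
  have hm : ∀ X Y, contractCov a m X Y (mlow a m) p = _ :=
    fun X Y => contractCov_eq hr0 hD hs.ne' X Y (mup a m)
  -- Restores the folded names of the lowered fields, which unification has unfolded.
  change ∀ X Y, contractCov a m X Y (ℓlow a m) p = ∑ ν, Y ν * ∑ μ, X μ *
    pdC ν (fun q => ℓlow a m q μ) p - _ at hℓ
  change ∀ X Y, contractCov a m X Y (nlow a m) p = ∑ ν, Y ν * ∑ μ, X μ *
    pdC ν (fun q => nlow a m q μ) p - _ at hn
  change ∀ X Y, contractCov a m X Y (mlow a m) p = ∑ ν, Y ν * ∑ μ, X μ *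
    pdC ν (fun q => mlow a m q μ) p - _ at hm
  simp only [pdC_ℓlow hr0 hD] at hℓ
  simp only [pdC_nlow hr0 hD] at hn
  have hρ := ρk_ne (a := a) (p 2) hr0
  have hS := (Sigk_pos (a := a) (p 2) hr0).ne'
  have hSC : ((Sigk a (p 1) (p 2) : ℝ) : ℂ) ≠ 0 := by exact_mod_cast hS
  have hDC : ((Δk a m (p 1) : ℝ) : ℂ) ≠ 0 := by exact_mod_cast hD.ne'
  have hsC : ((sin (p 2) : ℝ) : ℂ) ≠ 0 := by exact_mod_cast hs.ne'
  have h2C : ((√2 : ℝ) : ℂ) ≠ 0 := by simp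
  have hI := Complex.I_sq
  have hcs : ((sin (p 2) : ℝ) : ℂ) ^ 2 + ((cos (p 2) : ℝ) : ℂ) ^ 2 = 1 := by
    exact_mod_cast sin_sq_add_cos_sq (p 2)
  have hSe : ((Sigk a (p 1) (p 2) : ℝ) : ℂ) = p 1 ^ 2 + a ^ 2 * ((cos (p 2) : ℝ) : ℂ) ^ 2 := by
    simp only [Sigk]; push_cast; rfl
  have hDe : ((Δk a m (p 1) : ℝ) : ℂ) = p 1 ^ 2 - 2 * m * p 1 + a ^ 2 := by
    simp only [Δk]; push_cast; rfl
  have hK : ((Kk a m (p 1) (p 2) : ℝ) : ℂ) = 2 * m * p 1 / Sigk a (p 1) (p 2) := by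
    simp only [Kk]; push_cast; rfl
  have hKr : ((Kr a m (p 1) (p 2) : ℝ) : ℂ) = 2 * m / Sigk a (p 1) (p 2) -
      4 * m * p 1 ^ 2 / (Sigk a (p 1) (p 2) : ℝ) ^ 2 := by
    simp only [Kr]; push_cast; rfl
  have hKθ : ((Kθ a m (p 1) (p 2) : ℝ) : ℂ) = 4 * m * p 1 * a ^ 2 * (cos (p 2) : ℝ) *
      (sin (p 2) : ℝ) / (Sigk a (p 1) (p 2) : ℝ) ^ 2 := by
    simp only [Kθ]; push_cast; rfl
  have hms : ∀ i, mst a m p i = 1 / ((√2 : ℝ) * (p 1 - Complex.I * a * (cos (p 2) : ℝ))) *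
      ![-(Complex.I * a * (sin (p 2) : ℝ)), 0, 1, -(Complex.I / (sin (p 2) : ℝ))] i := by
    intro i
    simp only [mst, mup, map_mul, map_div₀, map_one, map_add, Complex.conj_ofReal,
      Complex.conj_I]
    fin_cases i <;> simp [-Complex.ofReal_sin, -Complex.ofReal_cos, neg_div, sub_eq_add_neg]
  have hρ' : (p 1 - Complex.I * a * (cos (p 2) : ℝ) : ℂ) ≠ 0 := by
    intro h
    rw [Sigk_eq_ρk, h, mul_zero] at hSC
    exact hSC rfl
  have hρe : (p 1 + Complex.I * a * (cos (p 2) : ℝ) : ℂ) ≠ 0 := hρ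
  have hωℓ : ωk a (p 2) (ℓup a m p) = Sigk a (p 1) (p 2) / Δk a m (p 1) := by
    simp only [ωk, ℓup, Matrix.cons_val]; push_cast [-Complex.ofReal_sin, -Complex.ofReal_cos]
    field_simp; grind
  have hωn : ωk a (p 2) (nup a m p) = 1 / 2 := by
    simp only [ωk, nup, Matrix.cons_val]; push_cast [-Complex.ofReal_sin, -Complex.ofReal_cos]
    field_simp; grind
  have hωm : ωk a (p 2) (mup a m p) = 0 := by
    simp only [ωk, mup, Matrix.cons_val]; field_simp; grind
  have hωms : ωk a (p 2) (mst a m p) = 0 := by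
    simp only [ωk, hms, Matrix.cons_val]; field_simp; grind
  have hmu : ∀ i, mup a m p i = 1 / ((√2 : ℝ) * (p 1 + Complex.I * a * (cos (p 2) : ℝ))) *
      ![Complex.I * a * (sin (p 2) : ℝ), 0, 1, Complex.I / (sin (p 2) : ℝ)] i := fun i => rfl
  refine ⟨?_, ?_, ?_, ?_, ?_⟩
  · rw [hℓ]
    simp only [Gr, Gθ, hωℓ, hωm, Fin.sum_univ_four]
    simp only [ℓup, hmu, dℓ, Matrix.cons_val, Pi.zero_apply, hK, hKr, hKθ]
    push_cast [-Complex.ofReal_sin, -Complex.ofReal_cos]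
    clear hm hℓ hn hms hmu hωℓ hωn hωm hωms hK hKr hKθ hS hD hs
    -- The expression is linear in the normalization factor of `m`, kept as an atom `ι`.
    generalize 1 / (((√2 : ℝ) : ℂ) * (p 1 + Complex.I * a * (cos (p 2) : ℝ))) = ι
    clear hρ' hρe h2C
    generalize ((Δk a m (p 1) : ℝ) : ℂ) = D at *
    generalize ((Sigk a (p 1) (p 2) : ℝ) : ℂ) = S at *
    generalize ((sin (p 2) : ℝ) : ℂ) = s at *
    generalize ((cos (p 2) : ℝ) : ℂ) = c at *
    generalize ((p 1 : ℝ) : ℂ) = r at *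
    generalize ((a : ℝ) : ℂ) = A at *
    generalize ((m : ℝ) : ℂ) = M at *
    clear hρ hr0 ham hr hθ
    field_simp
    grind
  · rw [hℓ]
    simp only [Gr, Gθ, hωℓ, hωm, Fin.sum_univ_four]
    simp only [ℓup, hmu, dℓ, Matrix.cons_val, Pi.zero_apply, hK, hKr, hKθ]
    push_cast [-Complex.ofReal_sin, -Complex.ofReal_cos]
    clear hm hℓ hn hms hmu hωℓ hωn hωm hωms hK hKr hKθ hS hD hs
    generalize 1 / (((√2 : ℝ) : ℂ) * (p 1 + Complex.I * a * (cos (p 2) : ℝ))) = ι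
    clear hρ' hρe h2C
    generalize ((Δk a m (p 1) : ℝ) : ℂ) = D at *
    generalize ((Sigk a (p 1) (p 2) : ℝ) : ℂ) = S at *
    generalize ((sin (p 2) : ℝ) : ℂ) = s at *
    generalize ((cos (p 2) : ℝ) : ℂ) = c at *
    generalize ((p 1 : ℝ) : ℂ) = r at *
    generalize ((a : ℝ) : ℂ) = A at *
    generalize ((m : ℝ) : ℂ) = M at *
    clear hρ hr0 ham hr hθ
    field_simp
    grind
  · rw [hn]
    simp only [Gr, Gθ, hωms, hωn, Fin.sum_univ_four]
    simp only [nup, hms, dn, Hr, Hθ, Matrix.cons_val, Pi.zero_apply, hK, hKr, hKθ]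
    push_cast [-Complex.ofReal_sin, -Complex.ofReal_cos]
    clear hm hℓ hn hms hmu hωℓ hωn hωm hωms hK hKr hKθ hS hD hs
    generalize 1 / (((√2 : ℝ) : ℂ) * (p 1 - Complex.I * a * (cos (p 2) : ℝ))) = ι
    clear hρ' hρe h2C
    generalize ((Δk a m (p 1) : ℝ) : ℂ) = D at *
    generalize ((Sigk a (p 1) (p 2) : ℝ) : ℂ) = S at *
    generalize ((sin (p 2) : ℝ) : ℂ) = s at *
    generalize ((cos (p 2) : ℝ) : ℂ) = c at *
    generalize ((p 1 : ℝ) : ℂ) = r at *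
    generalize ((a : ℝ) : ℂ) = A at *
    generalize ((m : ℝ) : ℂ) = M at *
    clear hρ hr0 ham hr hθ
    field_simp
    grind
  · rw [hn]
    simp only [Gr, Gθ, hωms, hωn, Fin.sum_univ_four]
    simp only [nup, hms, dn, Hr, Hθ, Matrix.cons_val, Pi.zero_apply, hK, hKr, hKθ]
    push_cast [-Complex.ofReal_sin, -Complex.ofReal_cos]
    clear hm hℓ hn hms hmu hωℓ hωn hωm hωms hK hKr hKθ hS hD hs
    generalize 1 / (((√2 : ℝ) : ℂ) * (p 1 - Complex.I * a * (cos (p 2) : ℝ))) = ι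
    clear hρ' hρe h2C
    generalize ((Δk a m (p 1) : ℝ) : ℂ) = D at *
    generalize ((Sigk a (p 1) (p 2) : ℝ) : ℂ) = S at *
    generalize ((sin (p 2) : ℝ) : ℂ) = s at *
    generalize ((cos (p 2) : ℝ) : ℂ) = c at *
    generalize ((p 1 : ℝ) : ℂ) = r at *
    generalize ((a : ℝ) : ℂ) = A at *
    generalize ((m : ℝ) : ℂ) = M at *
    clear hρ hr0 ham hr hθ
    field_simp
    grind
  · have e1 : contractCov a m (nup a m p) (ℓup a m p) (ℓlow a m) p = 0 := by
      rw [hℓ]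
      simp only [Gr, Gθ, hωℓ, hωn, Fin.sum_univ_four]
      simp only [ℓup, nup, dℓ, Matrix.cons_val, Pi.zero_apply, hK, hKr, hKθ]
      push_cast [-Complex.ofReal_sin, -Complex.ofReal_cos]
      clear hm hℓ hn hms hmu hωℓ hωn hωm hωms hK hKr hKθ hS hD hs hρ' hρe h2C
      generalize ((Δk a m (p 1) : ℝ) : ℂ) = D at *
      generalize ((Sigk a (p 1) (p 2) : ℝ) : ℂ) = S at *
      generalize ((sin (p 2) : ℝ) : ℂ) = s at *
      generalize ((cos (p 2) : ℝ) : ℂ) = c at *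
      generalize ((p 1 : ℝ) : ℂ) = r at *
      generalize ((a : ℝ) : ℂ) = A at *
      generalize ((m : ℝ) : ℂ) = M at *
      clear hρ hr0 ham hr hθ
      field_simp
      grind
    have e2 : contractCov a m (mst a m p) (ℓup a m p) (mlow a m) p = 0 := by
      have hℓ2 : ℓup a m p 2 = 0 := rfl
      have hSρ : ((Sigk a (p 1) (p 2) : ℝ) : ℂ) =
          (p 1 + Complex.I * a * (cos (p 2) : ℝ)) * (p 1 - Complex.I * a * (cos (p 2) : ℝ)) :=
        Sigk_eq_ρk a (p 1) (p 2)
      have hd0 : ∀ i, pdC 0 (fun q => mlow a m q i) p = 0 := fun i =>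
        pdC_mlow_r hr0 hs.ne' 0 i (by decide)
      have hd1 : ∀ i, pdC 1 (fun q => mlow a m q i) p = dmr a (p 1) (p 2) i := fun i =>
        pdC_mlow_r hr0 hs.ne' 1 i (by decide)
      have hd3 : ∀ i, pdC 3 (fun q => mlow a m q i) p = 0 := fun i =>
        pdC_mlow_r hr0 hs.ne' 3 i (by decide)
      rw [hm]
      simp only [Gr, Gθ, hωℓ, hωm, hωms, Fin.sum_univ_four, hd0, hd1, hd3, hℓ2]
      simp only [ℓup, hmu, hms, dmr, Matrix.cons_val, ρk, hK, hKr, hKθ]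
      push_cast [-Complex.ofReal_sin, -Complex.ofReal_cos]
      clear hm hℓ hn hms hmu hωℓ hωn hωm hωms hK hKr hKθ hS hD hs hd0 hd1 hd3 hℓ2
      simp only [ρk] at hρ
      generalize ((√2 : ℝ) : ℂ) = w at *
      generalize ((Δk a m (p 1) : ℝ) : ℂ) = D at *
      generalize ((Sigk a (p 1) (p 2) : ℝ) : ℂ) = S at *
      generalize ((sin (p 2) : ℝ) : ℂ) = s at *
      generalize ((cos (p 2) : ℝ) : ℂ) = c at *
      generalize ((p 1 : ℝ) : ℂ) = r at *
      generalize ((a : ℝ) : ℂ) = A at *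
      generalize ((m : ℝ) : ℂ) = M at *
      clear hr0 ham hr hθ hρ
      simp only [zero_mul, mul_zero, add_zero, zero_add, sub_zero]
      rw [hSρ] at hSe
      field_simp
      clear hρ' hρe h2C hDC hSC hsC hSe hSρ e1
      grind
    rw [e1, e2]; ring

end KerrStmt4
end
end

section
/- (Reconstruction of the Faraday tensor from its Newman–Penrose scalars.) Let F = (F_{μν}) be any real antisymmetric 4×4 matrix at a point of U, and define Φ₀ := F_{μν}ℓ^μm^ν, Φ₁ := ½F_{μν}(ℓ^μn^ν + m*^μm^ν), Φ₂ := F_{μν}m*^μn^ν. Then F_{μν} = 2 Re( Φ₀ m*_{[μ}n_{ν]} + Φ₁ (n_{[μ}ℓ_{ν]} + m_{[μ}m*_{ν]}) + Φ₂ ℓ_{[μ}m_{ν]} ) for all μ,ν, where X_{[μ}Y_{ν]} := X_μY_ν − X_νY_μ, Re(z) := ½(z + z̄), and X_μ := ḡ_{μν}X^ν are the lowered tetrad components. -/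
/-!
The tetrad satisfies the completeness relation
`δ^α_μ = -ℓ^α n_μ - n^α ℓ_μ + m^α m*_μ + m*^α m_μ` (`completeness`), i.e. the basis dual to
`(ℓ, n, m, m*)` is `(-n_, -ℓ_, m*_, m_)`, because `ℓ·n = -1`, `m·m* = 1` and all other products
vanish. Inserting this in both slots of `F_{μν} = F(∂_μ, ∂_ν)` and using antisymmetry leaves one
term for each of the six pairs of tetrad vectors. Since `ℓ`, `n` are real and `m*` is conjugate
to `m`, the pairs `(ℓ, m*)` and `(m, n)` are conjugate to `(ℓ, m)` and `(m*, n)`, while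
`F(ℓ,n) n_{[μ}ℓ_{ν]}` and `F(m*,m) m_{[μ}m*_{ν]}` are both real and the cross terms they produce
in `Φ₁ (n_{[μ}ℓ_{ν]} + m_{[μ}m*_{ν]})` are purely imaginary (`reconstruct`).
-/


/-!
Statement 0: Normalization relations of the Kinnersley tetrad on the
Boyer–Lindquist chart of the Kerr metric.
-/

noncomputable section

open Real

namespace KerrStmt6

/-- `Δ(r) = r² − 2mr + a²`. -/
def Δk (a m r : ℝ) : ℝ := r ^ 2 - 2 * m * r + a ^ 2

/-- `r₊ = m + √(m² − a²)`. -/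
def rplus (a m : ℝ) : ℝ := m + Real.sqrt (m ^ 2 - a ^ 2)

/-- `Σ(r,θ) = r² + a² cos² θ`. -/
def Sigk (a r θ : ℝ) : ℝ := r ^ 2 + a ^ 2 * Real.cos θ ^ 2

/-- Kerr metric components in Boyer–Lindquist coordinates, at the point
`p = (t, r, θ, φ)` (coordinate order `t,r,θ,φ`). -/
def gK (a m : ℝ) (p : Fin 4 → ℝ) : Matrix (Fin 4) (Fin 4) ℝ :=
  let r := p 1
  let θ := p 2
  !![ -((Δk a m r - a ^ 2 * Real.sin θ ^ 2) / Sigk a r θ), 0, 0,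
        -(a * Real.sin θ ^ 2 * (r ^ 2 + a ^ 2 - Δk a m r) / Sigk a r θ);
      0, Sigk a r θ / Δk a m r, 0, 0;
      0, 0, Sigk a r θ, 0;
      -(a * Real.sin θ ^ 2 * (r ^ 2 + a ^ 2 - Δk a m r) / Sigk a r θ), 0, 0,
        ((r ^ 2 + a ^ 2) ^ 2 - Δk a m r * a ^ 2 * Real.sin θ ^ 2) * Real.sin θ ^ 2 / Sigk a r θ ]

/-- The Kinnersley tetrad vector `ℓ`. -/
def ℓup (a m : ℝ) (p : Fin 4 → ℝ) : Fin 4 → ℂ :=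
  let r := p 1
  ![(((r ^ 2 + a ^ 2) / Δk a m r : ℝ) : ℂ), 1, 0, ((a / Δk a m r : ℝ) : ℂ)]

/-- The Kinnersley tetrad vector `n`. -/
def nup (a m : ℝ) (p : Fin 4 → ℝ) : Fin 4 → ℂ :=
  let r := p 1
  let θ := p 2
  fun μ => ((1 / (2 * Sigk a r θ) : ℝ) : ℂ) *
    ![((r ^ 2 + a ^ 2 : ℝ) : ℂ), ((-(Δk a m r) : ℝ) : ℂ), 0, ((a : ℝ) : ℂ)] μ

/-- The Kinnersley tetrad vector `m`. -/
def mup (a m : ℝ) (p : Fin 4 → ℝ) : Fin 4 → ℂ :=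
  let r := p 1
  let θ := p 2
  fun μ => (1 / (Real.sqrt 2 * ((r : ℂ) + Complex.I * (a : ℂ) * (Real.cos θ : ℂ)))) *
    ![Complex.I * (a : ℂ) * (Real.sin θ : ℂ), 0, 1, Complex.I / (Real.sin θ : ℂ)] μ

/-- The componentwise complex conjugate `m*` of `m`. -/
def mst (a m : ℝ) (p : Fin 4 → ℝ) : Fin 4 → ℂ :=
  fun μ => starRingEnd ℂ (mup a m p μ)

/-- Complex-bilinear contraction with the Kerr metric:
`ḡ(X,Y) = Σ_{μ,ν} ḡ_{μν} X^μ Y^ν`. -/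
def gdot (a m : ℝ) (p : Fin 4 → ℝ) (X Y : Fin 4 → ℂ) : ℂ :=
  ∑ μ : Fin 4, ∑ ν : Fin 4, ((gK a m p μ ν : ℝ) : ℂ) * X μ * Y ν

/-- Lowered components `X_μ := ḡ_{μν} X^ν`. -/
def lower (a m : ℝ) (p : Fin 4 → ℝ) (X : Fin 4 → ℂ) : Fin 4 → ℂ :=
  fun μ => ∑ ν : Fin 4, ((gK a m p μ ν : ℝ) : ℂ) * X ν

/-- Antisymmetrized product `X_{[μ}Y_{ν]} := X_μ Y_ν − X_ν Y_μ`. -/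
def asym (X Y : Fin 4 → ℂ) (μ ν : Fin 4) : ℂ := X μ * Y ν - X ν * Y μ

/-- `F(X, Y) = F_{μν} X^μ Y^ν`, the complex-bilinear extension of the real matrix `F`. -/
def contr (F : Matrix (Fin 4) (Fin 4) ℝ) (X Y : Fin 4 → ℂ) : ℂ :=
  ∑ μ : Fin 4, ∑ ν : Fin 4, ((F μ ν : ℝ) : ℂ) * X μ * Y ν

lemma contr_conj (F : Matrix (Fin 4) (Fin 4) ℝ) (X Y : Fin 4 → ℂ) :
    starRingEnd ℂ (contr F X Y)
      = contr F (fun μ => starRingEnd ℂ (X μ)) (fun μ => starRingEnd ℂ (Y μ)) := by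
  simp [contr, map_sum]

lemma contr_swap (F : Matrix (Fin 4) (Fin 4) ℝ) (hF : ∀ μ ν : Fin 4, F μ ν = -F ν μ)
    (X Y : Fin 4 → ℂ) : contr F X Y = -contr F Y X := by
  unfold contr
  rw [Finset.sum_comm, ← Finset.sum_neg_distrib]
  refine Finset.sum_congr rfl fun μ _ => ?_
  rw [← Finset.sum_neg_distrib]
  refine Finset.sum_congr rfl fun ν _ => ?_
  rw [hF ν μ]
  push_cast
  ring

lemma contr_self (F : Matrix (Fin 4) (Fin 4) ℝ) (hF : ∀ μ ν : Fin 4, F μ ν = -F ν μ)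
    (X : Fin 4 → ℂ) : contr F X X = 0 :=
  self_eq_neg.mp (contr_swap F hF X X)

lemma contr_single (F : Matrix (Fin 4) (Fin 4) ℝ) (μ ν : Fin 4) :
    contr F (Pi.single μ 1) (Pi.single ν 1) = ((F μ ν : ℝ) : ℂ) := by
  simp [contr, Pi.single_apply]

lemma contr_comb_left (F : Matrix (Fin 4) (Fin 4) ℝ) (a b c d : ℂ) (X Y Z W V : Fin 4 → ℂ) :
    contr F (fun α => a * X α + b * Y α + c * Z α + d * W α) V
      = a * contr F X V + b * contr F Y V + c * contr F Z V + d * contr F W V := by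
  simp only [contr, Finset.mul_sum, ← Finset.sum_add_distrib]
  refine Finset.sum_congr rfl fun μ _ => Finset.sum_congr rfl fun ν _ => ?_
  ring

lemma contr_comb_right (F : Matrix (Fin 4) (Fin 4) ℝ) (a b c d : ℂ) (X Y Z W V : Fin 4 → ℂ) :
    contr F V (fun α => a * X α + b * Y α + c * Z α + d * W α)
      = a * contr F V X + b * contr F V Y + c * contr F V Z + d * contr F V W := by
  simp only [contr, Finset.mul_sum, ← Finset.sum_add_distrib]
  refine Finset.sum_congr rfl fun μ _ => Finset.sum_congr rfl fun ν _ => ?_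
  ring

/-- The reconstruction formula for an arbitrary null tetrad: it uses only the reality properties
of the tetrad `(l, n, m, ms)` with lowered components `(L, N, M, Ms)`, and completeness. -/
lemma reconstruct (F : Matrix (Fin 4) (Fin 4) ℝ) (hF : ∀ μ ν : Fin 4, F μ ν = -F ν μ)
    (l n m ms L N M Ms : Fin 4 → ℂ)
    (hl : ∀ μ, starRingEnd ℂ (l μ) = l μ) (hn : ∀ μ, starRingEnd ℂ (n μ) = n μ)
    (hm : ∀ μ, starRingEnd ℂ (m μ) = ms μ)
    (hL : ∀ μ, starRingEnd ℂ (L μ) = L μ) (hN : ∀ μ, starRingEnd ℂ (N μ) = N μ)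
    (hM : ∀ μ, starRingEnd ℂ (M μ) = Ms μ)
    (hc : ∀ μ, (Pi.single μ 1 : Fin 4 → ℂ) =
      fun α => (-N μ) * l α + (-L μ) * n α + Ms μ * m α + M μ * ms α)
    (μ ν : Fin 4) :
    F μ ν = 2 * (contr F l m * asym Ms N μ ν
      + (1 / 2 : ℂ) * (contr F l n + contr F ms m) * (asym N L μ ν + asym M Ms μ ν)
      + contr F ms n * asym L M μ ν).re := by
  have hms : ∀ μ, starRingEnd ℂ (ms μ) = m μ := fun μ => by rw [← hm, Complex.conj_conj]
  have hMs : ∀ μ, starRingEnd ℂ (Ms μ) = M μ := fun μ => by rw [← hM, Complex.conj_conj]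
  apply Complex.ofReal_injective
  rw [Complex.ofReal_mul, Complex.re_eq_add_conj, ← contr_single F μ ν, hc μ, hc ν]
  simp only [contr_comb_left, contr_comb_right, map_add, map_mul, map_sub, map_div₀, map_one,
    map_ofNat, contr_conj, asym, hl, hn, hm, hms, hL, hN, hM, hMs, contr_self F hF,
    Complex.ofReal_ofNat]
  rw [contr_swap F hF n l, contr_swap F hF m l, contr_swap F hF ms l, contr_swap F hF n m,
    contr_swap F hF n ms, contr_swap F hF m ms]
  ring

section Tetrad

variable {a m : ℝ} {p : Fin 4 → ℝ}

lemma Δk_pos (ham : |a| < m) (hr : rplus a m < p 1) : 0 < Δk a m (p 1) := by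
  have h1 : 0 ≤ m ^ 2 - a ^ 2 := by
    have := sq_lt_sq' (by linarith [abs_nonneg a]) ham
    rw [sq_abs] at this
    linarith
  have h2 := Real.sq_sqrt h1
  have h3 := Real.sqrt_nonneg (m ^ 2 - a ^ 2)
  unfold rplus at hr
  unfold Δk
  nlinarith

lemma radius_pos (ham : |a| < m) (hr : rplus a m < p 1) : 0 < p 1 := by
  have h3 := Real.sqrt_nonneg (m ^ 2 - a ^ 2)
  unfold rplus at hr
  linarith [abs_nonneg a]

lemma lower_conj (X : Fin 4 → ℂ) (μ : Fin 4) :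
    starRingEnd ℂ (lower a m p X μ) = lower a m p (fun α => starRingEnd ℂ (X α)) μ := by
  simp [lower, map_sum]

lemma ℓup_conj (μ : Fin 4) : starRingEnd ℂ (ℓup a m p μ) = ℓup a m p μ := by
  fin_cases μ <;> simp [ℓup]

lemma nup_conj (μ : Fin 4) : starRingEnd ℂ (nup a m p μ) = nup a m p μ := by
  simp only [nup]
  rw [map_mul, Complex.conj_ofReal]
  congr 1
  fin_cases μ <;> simp

lemma Sigk_eq : Sigk a (p 1) (p 2) = p 1 ^ 2 + a ^ 2 * (1 - Real.sin (p 2) ^ 2) := by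
  rw [Sigk, Real.cos_sq']

lemma lower_ℓ (hΔ : Δk a m (p 1) ≠ 0) (hS0 : Sigk a (p 1) (p 2) ≠ 0) :
    lower a m p (ℓup a m p) =
      ![-1, ((Sigk a (p 1) (p 2) / Δk a m (p 1) : ℝ) : ℂ), 0,
        ((a * Real.sin (p 2) ^ 2 : ℝ) : ℂ)] := by
  ext μ
  fin_cases μ <;> simp only [lower, ℓup, gK, Fin.sum_univ_four] <;> simp <;> norm_cast <;>
    field_simp <;> rw [Sigk_eq] <;> push_cast <;> ring

lemma lower_n (hΔ : Δk a m (p 1) ≠ 0) (hS0 : Sigk a (p 1) (p 2) ≠ 0) :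
    lower a m p (nup a m p) = fun μ =>
      ((Δk a m (p 1) / (2 * Sigk a (p 1) (p 2)) : ℝ) : ℂ) *
      ![-1, ((-(Sigk a (p 1) (p 2) / Δk a m (p 1)) : ℝ) : ℂ), 0,
        ((a * Real.sin (p 2) ^ 2 : ℝ) : ℂ)] μ := by
  have hΔ1 : ((Δk a m (p 1) : ℝ) : ℂ) ≠ 0 := Complex.ofReal_ne_zero.mpr hΔ
  have hS1 : ((Sigk a (p 1) (p 2) : ℝ) : ℂ) ≠ 0 := Complex.ofReal_ne_zero.mpr hS0
  have hS : ((Sigk a (p 1) (p 2) : ℝ) : ℂ)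
      = (p 1 : ℂ) ^ 2 + (a : ℂ) ^ 2 * (1 - (Real.sin (p 2) : ℂ) ^ 2) := by
    rw [Sigk_eq]
    push_cast
    rfl
  ext μ
  fin_cases μ <;> simp only [lower, nup, gK, Fin.sum_univ_four] <;>
    simp [-Complex.ofReal_sin, -Complex.ofReal_cos] <;> field_simp <;> (try rw [hS]) <;> ring

/-- The scalar prefactor `1 / (√2 (r + i a cos θ))` of the tetrad vector `m`. -/
def mfac (a : ℝ) (p : Fin 4 → ℝ) : ℂ :=
  1 / (Real.sqrt 2 * ((p 1 : ℂ) + Complex.I * (a : ℂ) * (Real.cos (p 2) : ℂ)))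

lemma mfac_mul_conj : mfac a p * starRingEnd ℂ (mfac a p)
    = 1 / (2 * (Sigk a (p 1) (p 2) : ℂ)) := by
  have h2 : ((Real.sqrt 2 : ℝ) : ℂ) * ((Real.sqrt 2 : ℝ) : ℂ) = 2 := by
    rw [← Complex.ofReal_mul, Real.mul_self_sqrt (by norm_num)]
    norm_num
  simp only [mfac, map_div₀, map_one, map_mul, map_add, Complex.conj_ofReal, Complex.conj_I]
  rw [div_mul_div_comm, one_mul, ← h2]
  congr 1
  simp only [Sigk]
  push_cast
  linear_combination (-(Real.sqrt 2 : ℂ) ^ 2 * a ^ 2 * Complex.cos (p 2) ^ 2) * Complex.I_sq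

lemma lower_m (hs0 : Real.sin (p 2) ≠ 0) (hS0 : Sigk a (p 1) (p 2) ≠ 0) :
    lower a m p (mup a m p) = fun μ => mfac a p *
      ![-(Complex.I * (a : ℂ) * (Real.sin (p 2) : ℂ)), 0, (Sigk a (p 1) (p 2) : ℂ),
        Complex.I * ((p 1 ^ 2 + a ^ 2 : ℝ) : ℂ) * (Real.sin (p 2) : ℂ)] μ := by
  have hs1 : ((Real.sin (p 2) : ℝ) : ℂ) ≠ 0 := Complex.ofReal_ne_zero.mpr hs0
  have hS1 : ((Sigk a (p 1) (p 2) : ℝ) : ℂ) ≠ 0 := Complex.ofReal_ne_zero.mpr hS0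
  have hS : ((Sigk a (p 1) (p 2) : ℝ) : ℂ)
      = (p 1 : ℂ) ^ 2 + (a : ℂ) ^ 2 * (1 - (Real.sin (p 2) : ℂ) ^ 2) := by
    rw [Sigk_eq]
    push_cast
    rfl
  ext μ
  simp only [lower, mup]
  change ∑ ν, _ * (mfac a p * _) = _
  simp only [mul_left_comm _ (mfac a p), ← Finset.mul_sum]
  congr 1
  fin_cases μ <;>
    simp [gK, Fin.sum_univ_four, -Complex.ofReal_sin, -Complex.ofReal_cos] <;> field_simp <;>
    rw [hS] <;> ring

/-- Completeness of the Kinnersley tetrad. -/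
lemma completeness (hΔ : Δk a m (p 1) ≠ 0) (hs0 : Real.sin (p 2) ≠ 0)
    (hS0 : Sigk a (p 1) (p 2) ≠ 0) (μ : Fin 4) :
    (Pi.single μ 1 : Fin 4 → ℂ) =
      fun α => (-lower a m p (nup a m p) μ) * ℓup a m p α
        + (-lower a m p (ℓup a m p) μ) * nup a m p α
        + lower a m p (mst a m p) μ * mup a m p α
        + lower a m p (mup a m p) μ * mst a m p α := by
  have hs1 : ((Real.sin (p 2) : ℝ) : ℂ) ≠ 0 := Complex.ofReal_ne_zero.mpr hs0
  have hΔ1 : ((Δk a m (p 1) : ℝ) : ℂ) ≠ 0 := Complex.ofReal_ne_zero.mpr hΔ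
  have hS1 : ((Sigk a (p 1) (p 2) : ℝ) : ℂ) ≠ 0 := Complex.ofReal_ne_zero.mpr hS0
  have hS : ((Sigk a (p 1) (p 2) : ℝ) : ℂ)
      = (p 1 : ℂ) ^ 2 + (a : ℂ) ^ 2 * (1 - (Real.sin (p 2) : ℂ) ^ 2) := by
    rw [Sigk_eq]
    push_cast
    rfl
  have hMs : lower a m p (mst a m p) μ = starRingEnd ℂ (lower a m p (mup a m p) μ) :=
    (lower_conj _ μ).symm
  -- The prefactors of `m` and `m*` enter only through their product `1 / (2Σ)`.
  have hfac : ∀ u v : ℂ, starRingEnd ℂ (mfac a p * u) * (mfac a p * v)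
      + mfac a p * u * starRingEnd ℂ (mfac a p * v)
      = 1 / (2 * (Sigk a (p 1) (p 2) : ℂ)) *
        (starRingEnd ℂ u * v + u * starRingEnd ℂ v) := by
    intro u v
    rw [← mfac_mul_conj, map_mul, map_mul]
    ring
  ext α
  have hup : mup a m p α = mfac a p * ![Complex.I * (a : ℂ) * (Real.sin (p 2) : ℂ), 0, 1,
    Complex.I / (Real.sin (p 2) : ℂ)] α := rfl
  have hst : mst a m p α = starRingEnd ℂ (mup a m p α) := rfl
  rw [hMs, hst, add_assoc, lower_m hs0 hS0, hup, hfac, lower_n hΔ hS0, lower_ℓ hΔ hS0]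
  fin_cases μ <;> fin_cases α <;>
    simp [ℓup, nup, -Complex.ofReal_sin, -Complex.ofReal_cos] <;> field_simp <;>
    (try simp only [Complex.I_sq]) <;> (try rw [hS]) <;>
    first | ring1 | simp

end Tetrad

/-- (Reconstruction of the Faraday tensor from its
Newman–Penrose scalars.) For any real antisymmetric `F` at a point of `U`,
`F_{μν} = 2 Re(Φ₀ m*_{[μ}n_{ν]} + Φ₁(n_{[μ}ℓ_{ν]} + m_{[μ}m*_{ν]}) + Φ₂ ℓ_{[μ}m_{ν]})`. -/
theorem faraday_reconstruction (a m : ℝ) (ha : 0 < |a|) (ham : |a| < m)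
    (p : Fin 4 → ℝ) (hr : rplus a m < p 1) (hθ : p 2 ∈ Set.Ioo 0 π)
    (F : Matrix (Fin 4) (Fin 4) ℝ) (hF : ∀ μ ν : Fin 4, F μ ν = -F ν μ) :
    let Φ₀ : ℂ := ∑ μ : Fin 4, ∑ ν : Fin 4,
      ((F μ ν : ℝ) : ℂ) * ℓup a m p μ * mup a m p ν
    let Φ₁ : ℂ := (1 / 2 : ℂ) * ∑ μ : Fin 4, ∑ ν : Fin 4,
      ((F μ ν : ℝ) : ℂ) * (ℓup a m p μ * nup a m p ν + mst a m p μ * mup a m p ν)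
    let Φ₂ : ℂ := ∑ μ : Fin 4, ∑ ν : Fin 4,
      ((F μ ν : ℝ) : ℂ) * mst a m p μ * nup a m p ν
    let ℓl := lower a m p (ℓup a m p)
    let nl := lower a m p (nup a m p)
    let ml := lower a m p (mup a m p)
    let msl := lower a m p (mst a m p)
    ∀ μ ν : Fin 4,
      F μ ν = 2 * (Φ₀ * asym msl nl μ ν + Φ₁ * (asym nl ℓl μ ν + asym ml msl μ ν)
        + Φ₂ * asym ℓl ml μ ν).re := by
  intro Φ₀ Φ₁ Φ₂ ℓl nl ml msl μ ν
  have hΔ := (Δk_pos ham hr).ne'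
  have hr0 := radius_pos ham hr
  have hs0 : Real.sin (p 2) ≠ 0 := (Real.sin_pos_of_pos_of_lt_pi hθ.1 hθ.2).ne'
  have hS0 : Sigk a (p 1) (p 2) ≠ 0 := by
    unfold Sigk
    positivity
  have key := reconstruct F hF (ℓup a m p) (nup a m p) (mup a m p) (mst a m p) ℓl nl ml msl
    ℓup_conj nup_conj (fun _ => rfl)
    (fun μ => (lower_conj _ μ).trans (by simp only [ℓup_conj]; rfl))
    (fun μ => (lower_conj _ μ).trans (by simp only [nup_conj]; rfl))
    (fun μ => lower_conj _ μ)
    (completeness hΔ hs0 hS0) μ ν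
  have h₁ : Φ₁ = (1 / 2 : ℂ) * (contr F (ℓup a m p) (nup a m p)
      + contr F (mst a m p) (mup a m p)) := by
    simp only [Φ₁, contr, ← Finset.sum_add_distrib, mul_add, mul_assoc]
  rw [h₁]
  exact key

end KerrStmt6
end
end

section
/- (Transformation to the regularized energy density.) For every s ∈ ℝ and all smooth η, λ : Ω → ℝ, setting λ̲ := e^{−γ}λ and η̲ := e^{−γ}η, the following identity holds pointwise on Ω: ¼N e^{−2γ} μ_q q^{ab}[ (∂_aλ − 4sλ∂_aγ)(∂_bλ − 4sλ∂_bγ) + (∂_aη − 4(1−s)η∂_aγ)(∂_bη − 4(1−s)η∂_bγ) + (∂_aη + 2sλ e^{−2γ}∂_aω)(∂_bη + 2sλ e^{−2γ}∂_bω) + (∂_aλ − 2(1−s)η e^{−2γ}∂_aω)(∂_bλ − 2(1−s)η e^{−2γ}∂_bω) ] + 2N μ_q q^{ab} e^{−2γ}( ∂_aγ ∂_bγ + ¼e^{−4γ}∂_aω ∂_bω )( s(1−2s)λ² + (1−s)(2s−1)η² ) = ½N μ_q q^{ab}[ (∂_aλ̲ − (2s−1)λ̲∂_aγ − (1−s)η̲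 e^{−2γ}∂_aω)(∂_bλ̲ − (2s−1)λ̲∂_bγ − (1−s)η̲ e^{−2γ}∂_bω) + (∂_aη̲ + (2s−1)η̲∂_aγ + sλ̲ e^{−2γ}∂_aω)(∂_bη̲ + (2s−1)η̲∂_bγ + sλ̲ e^{−2γ}∂_bω) ] + 2s(1−s)N μ_q q^{ab}( ∂_aγ ∂_bγ + ¼e^{−4γ}∂_aω ∂_bω )( λ̲² + η̲² ). -/
/-!
By the product rule `∂_a(e^{-γ} f) = e^{-γ}(∂_a f - f ∂_aγ)`, so both squares in the regularized
energy density carry a common factor `e^{-2γ}`: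
`∂λ̲ - (2s-1)λ̲∂γ - (1-s)η̲e^{-2γ}∂ω = e^{-γ}(∂λ - 2sλ∂γ - (1-s)ηe^{-2γ}∂ω)` and
`∂η̲ + (2s-1)η̲∂γ + sλ̲e^{-2γ}∂ω = e^{-γ}(∂η - 2(1-s)η∂γ + sλe^{-2γ}∂ω)`.
After this substitution the claim is a polynomial identity in the values and first derivatives of
the fields. It holds for each pair `(a, b)` separately, because the mixed `∂γ ∂ω` terms of the two
squares on the right cancel.
-/

noncomputable section

open Real MeasureTheory

namespace Stmt13

/-- Partial derivative `∂_a f` on `ℝ²` (coordinates indexed by `Fin 2`). -/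
def pd (a : Fin 2) (f : (Fin 2 → ℝ) → ℝ) (x : Fin 2 → ℝ) : ℝ :=
  fderiv ℝ f x (Pi.single a 1)

/-- The wave-map background quantity
`L₁ := 2e^{2γ}( ∂_b(N μ_q q^{ab} ∂_aγ) + N e^{−4γ} μ_q q^{ab} ∂_aω ∂_bω )`
(repeated indices summed). -/
def L₁ (N γ ω μq : (Fin 2 → ℝ) → ℝ) (q : (Fin 2 → ℝ) → Matrix (Fin 2) (Fin 2) ℝ)
    (x : Fin 2 → ℝ) : ℝ :=
  2 * Real.exp (2 * γ x) *
    ((∑ a : Fin 2, ∑ b : Fin 2, pd b (fun y => N y * μq y * q y a b * pd a γ y) x)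
      + N x * Real.exp (-(4 * γ x)) * μq x *
          ∑ a : Fin 2, ∑ b : Fin 2, q x a b * pd a ω x * pd b ω x)

/-- The wave-map background quantity `L₂ := −∂_b( N μ_q q^{ab} e^{−4γ} ∂_aω )`
(repeated indices summed). -/
def L₂ (N γ ω μq : (Fin 2 → ℝ) → ℝ) (q : (Fin 2 → ℝ) → Matrix (Fin 2) (Fin 2) ℝ)
    (x : Fin 2 → ℝ) : ℝ :=
  -∑ a : Fin 2, ∑ b : Fin 2,
    pd b (fun y => N y * μq y * q y a b * Real.exp (-(4 * γ y)) * pd a ω y) x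

/-- Product rule for the rescaled field `e^{-γ} f`. -/
lemma pd_exp_neg_mul {γ f : (Fin 2 → ℝ) → ℝ} {x : Fin 2 → ℝ} (a : Fin 2)
    (hγ : DifferentiableAt ℝ γ x) (hf : DifferentiableAt ℝ f x) :
    pd a (fun y => Real.exp (-(γ y)) * f y) x =
      Real.exp (-(γ x)) * (pd a f x - f x * pd a γ x) := by
  have h := (hγ.hasFDerivAt.neg.exp).mul hf.hasFDerivAt
  have h' : fderiv ℝ (fun y => Real.exp (-(γ y)) * f y) x = _ := h.fderiv
  simp only [pd, h']
  simp
  ring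

/-- (Transformation to the regularized energy density.) -/
theorem regularized_energy_density_transformation
    (Ω : Set (Fin 2 → ℝ)) (hΩ : IsOpen Ω)
    (N γ ω μq : (Fin 2 → ℝ) → ℝ) (q : (Fin 2 → ℝ) → Matrix (Fin 2) (Fin 2) ℝ)
    (hN : ContDiffOn ℝ (⊤ : ℕ∞) N Ω) (hγ : ContDiffOn ℝ (⊤ : ℕ∞) γ Ω) (hω : ContDiffOn ℝ (⊤ : ℕ∞) ω Ω)
    (hq : ∀ a b : Fin 2, ContDiffOn ℝ (⊤ : ℕ∞) (fun x => q x a b) Ω)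
    (hqsym : ∀ x : Fin 2 → ℝ, ∀ a b : Fin 2, q x a b = q x b a)
    (hμq : ContDiffOn ℝ (⊤ : ℕ∞) μq Ω) (hμqpos : ∀ x ∈ Ω, 0 < μq x)
    (s : ℝ) (η lam : (Fin 2 → ℝ) → ℝ)
    (hη : ContDiffOn ℝ (⊤ : ℕ∞) η Ω) (hlam : ContDiffOn ℝ (⊤ : ℕ∞) lam Ω) :
    ∀ x ∈ Ω,
      (let lamu : (Fin 2 → ℝ) → ℝ := fun y => Real.exp (-(γ y)) * lam y
      let ηu : (Fin 2 → ℝ) → ℝ := fun y => Real.exp (-(γ y)) * η y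
      (1 / 4) * N x * Real.exp (-(2 * γ x)) * μq x *
          (∑ a : Fin 2, ∑ b : Fin 2, q x a b *
            ((pd a lam x - 4 * s * lam x * pd a γ x) *
              (pd b lam x - 4 * s * lam x * pd b γ x)
            + (pd a η x - 4 * (1 - s) * η x * pd a γ x) *
              (pd b η x - 4 * (1 - s) * η x * pd b γ x)
            + (pd a η x + 2 * s * lam x * Real.exp (-(2 * γ x)) * pd a ω x) *
              (pd b η x + 2 * s * lam x * Real.exp (-(2 * γ x)) * pd b ω x)
            + (pd a lam x - 2 * (1 - s) * η x * Real.exp (-(2 * γ x)) * pd a ω x) *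
              (pd b lam x - 2 * (1 - s) * η x * Real.exp (-(2 * γ x)) * pd b ω x)))
        + 2 * N x * μq x * Real.exp (-(2 * γ x)) *
          (∑ a : Fin 2, ∑ b : Fin 2, q x a b *
            (pd a γ x * pd b γ x
              + (1 / 4) * Real.exp (-(4 * γ x)) * pd a ω x * pd b ω x)) *
          (s * (1 - 2 * s) * lam x ^ 2 + (1 - s) * (2 * s - 1) * η x ^ 2)
      =
      (1 / 2) * N x * μq x *
          (∑ a : Fin 2, ∑ b : Fin 2, q x a b *
            ((pd a lamu x - (2 * s - 1) * lamu x * pd a γ x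
                - (1 - s) * ηu x * Real.exp (-(2 * γ x)) * pd a ω x) *
              (pd b lamu x - (2 * s - 1) * lamu x * pd b γ x
                - (1 - s) * ηu x * Real.exp (-(2 * γ x)) * pd b ω x)
            + (pd a ηu x + (2 * s - 1) * ηu x * pd a γ x
                + s * lamu x * Real.exp (-(2 * γ x)) * pd a ω x) *
              (pd b ηu x + (2 * s - 1) * ηu x * pd b γ x
                + s * lamu x * Real.exp (-(2 * γ x)) * pd b ω x)))
        + 2 * s * (1 - s) * N x * μq x *
          (∑ a : Fin 2, ∑ b : Fin 2, q x a b *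
            (pd a γ x * pd b γ x
              + (1 / 4) * Real.exp (-(4 * γ x)) * pd a ω x * pd b ω x)) *
          (lamu x ^ 2 + ηu x ^ 2)) := by
  intro x hx lamu ηu
  have hd : ∀ {f : (Fin 2 → ℝ) → ℝ}, ContDiffOn ℝ (⊤ : ℕ∞) f Ω → DifferentiableAt ℝ f x :=
    fun hf => (hf.contDiffAt (hΩ.mem_nhds hx)).differentiableAt (by simp)
  have hl : ∀ a, pd a lamu x = Real.exp (-(γ x)) * (pd a lam x - lam x * pd a γ x) :=
    fun a => pd_exp_neg_mul a (hd hγ) (hd hlam)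
  have he : ∀ a, pd a ηu x = Real.exp (-(γ x)) * (pd a η x - η x * pd a γ x) :=
    fun a => pd_exp_neg_mul a (hd hγ) (hd hη)
  have hlx : lamu x = Real.exp (-(γ x)) * lam x := rfl
  have hex : ηu x = Real.exp (-(γ x)) * η x := rfl
  -- All exponentials are powers of `e^{-γ}`, which makes the identity polynomial.
  have h2 : Real.exp (-(2 * γ x)) = Real.exp (-(γ x)) ^ 2 := by
    rw [← Real.exp_nat_mul]; congr 1; push_cast; ring
  have h4 : Real.exp (-(4 * γ x)) = Real.exp (-(γ x)) ^ 4 := by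
    rw [← Real.exp_nat_mul]; congr 1; push_cast; ring
  simp only [hl, he, hlx, hex, h2, h4, Finset.mul_sum, Finset.sum_mul, ← Finset.sum_add_distrib]
  refine Finset.sum_congr rfl fun a _ => Finset.sum_congr rfl fun b _ => ?_
  ring

end Stmt13
end
end
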